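/- There exist absolute constants 0 < c ≤ C such that for all x, y > 1 and t > 0 with xy ≤ t, one has c·E ≤ p₁(t,x,y) ≤ C·E, where E = ln x · ln y · ( ln(3t/(x+√t)) · ln(3t/(y+√t)) )^{−1} · t^{−1} · exp(−(x²+y²)/(2t)). -/

import Mathlib

open Real MeasureTheory

/-- Modified Bessel function of the first kind, order 0. -/
noncomputable def I0 (z : ℝ) : ℝ := ∑' n : ℕ, (z/2)^(2*n) / ((n.factorial : ℝ))^2

/-- Modified Bessel function of the first kind, order 1. -/
noncomputable def I1 (z : ℝ) : ℝ :=
  ∑' n : ℕ, (z/2)^(2*n+1) / ((n.factorial : ℝ) * ((n+1).factorial : ℝ))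

/-- Heat kernel of the Bessel operator `d²/dx² + (1/x) d/dx` on `(0,∞)`
with respect to the measure `y dy`. -/
noncomputable def pk (t x y : ℝ) : ℝ :=
  t⁻¹ * Real.exp (-(x^2 + y^2)/(2*t)) * I0 (x*y/t)

/-- The function `h` from (AC): Dirichlet heat kernel of `(1/2) d²/dx²` on `(1,∞)`
multiplied by `(xy)⁻¹`. -/
noncomputable def hker (t x y : ℝ) : ℝ :=
  (2*Real.pi*t)^(-(1:ℝ)/2) * (x*y)⁻¹ *
    (Real.exp (-(x-y)^2/(2*t)) - Real.exp (-(x+y-2)^2/(2*t)))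

/-- Bundled hypotheses on the Dirichlet heat kernel `p₁` of the Bessel operator on
`(1,∞)` and on the density `q` of the first hitting time of `1` by the
2-dimensional Bessel process. -/
structure BesselHK (p₁ : ℝ → ℝ → ℝ → ℝ) (q : ℝ → ℝ → ℝ) : Prop where
  meas_p₁ : Measurable fun z : ℝ × ℝ × ℝ => p₁ z.1 z.2.1 z.2.2
  meas_q : Measurable fun z : ℝ × ℝ => q z.1 z.2
  p₁_nonneg : ∀ ⦃t x y : ℝ⦄, 0 < t → 1 < x → 1 < y → 0 ≤ p₁ t x y
  q_nonneg : ∀ ⦃x s : ℝ⦄, 1 < x → 0 < s → 0 ≤ q x s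
  hunt : ∀ ⦃t x y : ℝ⦄, 0 < t → 1 < x → 1 < y →
    p₁ t x y = pk t x y - ∫ u in Set.Ioo 0 t, q x u * pk (t-u) 1 y
  symm : ∀ ⦃t x y : ℝ⦄, 0 < t → 1 < x → 1 < y → p₁ t x y = p₁ t y x
  ck : ∀ ⦃t s x y : ℝ⦄, 0 < t → 0 < s → 1 < x → 1 < y →
    p₁ (t+s) x y = ∫ w in Set.Ioi (1:ℝ), p₁ t x w * p₁ s w y * w
  mass : ∀ ⦃t x : ℝ⦄, 0 < t → 1 < x →
    (∫ y in Set.Ioi (1:ℝ), p₁ t x y * y) = ∫ u in Set.Ioi t, q x u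
  q1 : ∃ c C : ℝ, 0 < c ∧ c ≤ C ∧ ∀ ⦃x s : ℝ⦄, 1 < x → 0 < s →
    ((s < 2*x →
      c * (((x-1)/Real.sqrt x) * s^(-(3:ℝ)/2) * Real.exp (-(x-1)^2/(2*s))) ≤ q x s ∧
      q x s ≤ C * (((x-1)/Real.sqrt x) * s^(-(3:ℝ)/2) * Real.exp (-(x-1)^2/(2*s)))) ∧
     (2*x ≤ s →
      c * (((x-1)/x) * ((1+Real.log x)/((1+Real.log (s+x))*(1+Real.log (1+s/x)))) *
        s⁻¹ * Real.exp (-(x-1)^2/(2*s))) ≤ q x s ∧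
      q x s ≤ C * (((x-1)/x) * ((1+Real.log x)/((1+Real.log (s+x))*(1+Real.log (1+s/x)))) *
        s⁻¹ * Real.exp (-(x-1)^2/(2*s)))))
  q2 : ∀ ⦃x s : ℝ⦄, 1 < x → 0 < s →
    ((x-1)/Real.sqrt (2*Real.pi*x)) * s^(-(3:ℝ)/2) * Real.exp (-(x-1)^2/(2*s)) ≤ q x s
  surv : ∃ c' C' : ℝ, 0 < c' ∧ c' ≤ C' ∧ ∀ ⦃t x : ℝ⦄, 0 < t → 1 < x →
    c' * min 1 (Real.log x / Real.log (1+Real.sqrt t)) ≤ (∫ u in Set.Ioi t, q x u) ∧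
    (∫ u in Set.Ioi t, q x u) ≤ C' * min 1 (Real.log x / Real.log (1+Real.sqrt t))
  ac : ∀ ⦃t x y : ℝ⦄, 0 < t → 1 < x → 1 < y →
    Real.sqrt (x*y) * hker t x y ≤ p₁ t x y ∧
    p₁ t x y ≤ Real.exp (t/8) * Real.sqrt (x*y) * hker t x y

/-!
Hunt's formula writes `p₁ t x y` as the free kernel `pk t x y` minus the average of
`pk (t - u) 1 y` over the hitting density `q x`, whose total mass is `1` by recurrence. Take
`y ≤ x`, so that `y ^ 2 ≤ t`.

Upper bound: `pk (t - u) 1 y` is at least `pk t 1 y` up to an error linear in `u`, so `p₁ t x y` is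
controlled by `pk t x y - pk t 1 y`, a tail of `q x` and a truncated first moment of `q x`; each is
at most a multiple of the survival profile. For `x ≤ 4√t` this gives a bound at time `t / 2` that
is uniform in the endpoint, and Chapman–Kolmogorov supplies the second logarithm; for `4√t ≤ x` one
logarithm already suffices, because the other one is comparable to `log x`.

Lower bound: when `4√t ≤ x`, starting the free motion from `1` a time `u ≥ (2t / (x - 1))²` later
halves the kernel towards `x`, so `p₁ t y x` is at least half of `pk t 1 x` times a survival
probability of `y`. When `x ≤ 4√t` and `t` is large, both endpoints are joined through the window
`[K√t, 2K√t]` by Chapman–Kolmogorov, and bounded `t` is covered by the comparison with `hker`.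
-/

/-! ### Integrals over half-lines -/

section Fubini

lemma integral_integral_mul_le_integral {α β : Type*} [MeasurableSpace α] [MeasurableSpace β]
    {μ : Measure α} {ν : Measure β} [SFinite μ] [SFinite ν] {f : β → ℝ} {k : α → β → ℝ}
    (hf : Integrable f ν) (hf₀ : ∀ᵐ b ∂ν, 0 ≤ f b)
    (hk : AEStronglyMeasurable (Function.uncurry k) (μ.prod ν))
    (hk₀ : ∀ᵐ b ∂ν, ∀ᵐ a ∂μ, 0 ≤ k a b) (hk_int : ∀ᵐ b ∂ν, Integrable (k · b) μ)
    (hk_le : ∀ᵐ b ∂ν, ∫ a, k a b ∂μ ≤ 1) :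
    ∫ a, ∫ b, f b * k a b ∂ν ∂μ ≤ ∫ b, f b ∂ν := by
  have h_meas : AEStronglyMeasurable (Function.uncurry fun a b => f b * k a b) (μ.prod ν) :=
    hf.aestronglyMeasurable.comp_snd.mul hk
  have h_norm : ∀ᵐ b ∂ν, ∫ a, ‖f b * k a b‖ ∂μ ≤ f b := by
    filter_upwards [hf₀, hk₀, hk_le] with b hb hkb hle
    calc ∫ a, ‖f b * k a b‖ ∂μ = ∫ a, f b * k a b ∂μ :=
          integral_congr_ae (hkb.mono fun a ha => norm_of_nonneg (mul_nonneg hb ha))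
      _ = f b * ∫ a, k a b ∂μ := integral_const_mul _ _
      _ ≤ f b := mul_le_of_le_one_right hb hle
  have h_int : Integrable (Function.uncurry fun a b => f b * k a b) (μ.prod ν) := by
    refine (integrable_prod_iff' h_meas).2 ⟨hk_int.mono fun b hb => hb.const_mul (f b), ?_⟩
    refine hf.mono' h_meas.norm.prod_swap.integral_prod_right' (h_norm.mono fun b hb => ?_)
    rwa [norm_of_nonneg (integral_nonneg fun a => norm_nonneg _)]
  rw [integral_integral_swap h_int]
  refine integral_mono_ae h_int.integral_prod_right hf (h_norm.mono fun b hb => ?_)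
  exact (le_abs_self _).trans ((norm_integral_le_integral_norm _).trans hb)

lemma integrable_indicator_tail {f : ℝ → ℝ} {s : ℝ} (hf : IntegrableOn f (Set.Ioi 0)) :
    Integrable (Function.uncurry fun r u => (Set.Ioi r).indicator f u)
      ((volume.restrict (Set.Ioo 0 s)).prod (volume.restrict (Set.Ioi 0))) := by
  have h_eq : (Function.uncurry fun r u => (Set.Ioi r).indicator f u) =
      {p : ℝ × ℝ | p.1 < p.2}.indicator fun p => f p.2 := by
    ext p; simp [Function.uncurry, Set.indicator]
  rw [h_eq]
  exact (Integrable.comp_snd hf _).indicator (measurableSet_lt measurable_fst measurable_snd)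

lemma setIntegral_indicator_Ioi {f : ℝ → ℝ} {r : ℝ} (hr : 0 ≤ r) :
    ∫ u in Set.Ioi 0, (Set.Ioi r).indicator f u = ∫ u in Set.Ioi r, f u := by
  rw [setIntegral_indicator measurableSet_Ioi,
    Set.inter_eq_right.2 (Set.Ioi_subset_Ioi hr)]

lemma integrableOn_setIntegral_Ioi {f : ℝ → ℝ} {s : ℝ} (hf : IntegrableOn f (Set.Ioi 0)) :
    IntegrableOn (fun r => ∫ u in Set.Ioi r, f u) (Set.Ioo 0 s) :=
  (integrableOn_congr_fun (fun _ hr => setIntegral_indicator_Ioi hr.1.le) measurableSet_Ioo).1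
    (integrable_indicator_tail hf).integral_prod_left

lemma setIntegral_mul_min_eq_setIntegral_tail {f : ℝ → ℝ} {s : ℝ} (hs : 0 ≤ s)
    (hf : IntegrableOn f (Set.Ioi 0)) :
    ∫ u in Set.Ioi 0, f u * min u s = ∫ r in Set.Ioo 0 s, ∫ u in Set.Ioi r, f u := by
  have h_slice : ∀ u ∈ Set.Ioi (0 : ℝ),
      ∫ r in Set.Ioo 0 s, (Set.Ioi r).indicator f u = f u * min u s := fun u hu => by
    have h_eq : (fun r => (Set.Ioi r).indicator f u) = (Set.Iio u).indicator fun _ => f u := by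
      ext r; simp [Set.indicator]
    rw [h_eq, setIntegral_indicator measurableSet_Iio, Set.Ioo_inter_Iio, setIntegral_const,
      volume_real_Ioo_of_le (le_min hs (Set.mem_Ioi.1 hu).le), sub_zero, min_comm, smul_eq_mul,
      mul_comm]
  rw [← setIntegral_congr_fun measurableSet_Ioo fun r hr => setIntegral_indicator_Ioi hr.1.le,
    integral_integral_swap (integrable_indicator_tail hf)]
  exact (setIntegral_congr_fun measurableSet_Ioi h_slice).symm

lemma eqOn_sqrt_div {s : ℝ} (hs : 0 ≤ s) :
    Set.EqOn (fun r => √(s / r)) (fun r => √s * r ^ (-(1 / 2) : ℝ)) (Set.Ioo 0 s) := fun r hr => by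
  beta_reduce
  rw [sqrt_div hs, rpow_neg hr.1.le, ← sqrt_eq_rpow, div_eq_mul_inv]

lemma integrableOn_sqrt_div {s : ℝ} (hs : 0 ≤ s) :
    IntegrableOn (fun r => √(s / r)) (Set.Ioo 0 s) := by
  refine (integrableOn_congr_fun (eqOn_sqrt_div hs) measurableSet_Ioo).2 (Integrable.const_mul ?_ _)
  exact ((intervalIntegrable_iff_integrableOn_Ioo_of_le hs).1
    (intervalIntegral.intervalIntegrable_rpow' (by norm_num)))

lemma integral_sqrt_div {s : ℝ} (hs : 0 ≤ s) : ∫ r in Set.Ioo 0 s, √(s / r) = 2 * s := by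
  rw [setIntegral_congr_fun measurableSet_Ioo (eqOn_sqrt_div hs), integral_const_mul,
    ← integral_Ioc_eq_integral_Ioo, ← intervalIntegral.integral_of_le hs,
    integral_rpow (Or.inl (by norm_num))]
  rw [show (-(1 / 2) + 1 : ℝ) = 1 / 2 by norm_num, zero_rpow (by norm_num), ← sqrt_eq_rpow]
  linear_combination 2 * mul_self_sqrt hs

end Fubini

/-! ### The Bessel function `I₀` -/

section BesselI0

lemma hasSum_I0 (z : ℝ) :
    HasSum (fun n : ℕ => (z ^ 2 / 4) ^ n / (n.factorial : ℝ) ^ 2) (I0 z) := by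
  have h_eq : I0 z = ∑' n : ℕ, (z ^ 2 / 4) ^ n / (n.factorial : ℝ) ^ 2 :=
    tsum_congr fun n => by rw [pow_mul, div_pow]; norm_num
  rw [h_eq]
  refine (Summable.of_nonneg_of_le (fun n => by positivity) (fun n => ?_)
    (summable_pow_div_factorial (z ^ 2 / 4))).hasSum
  have : (1 : ℝ) ≤ n.factorial := mod_cast n.factorial_pos
  gcongr
  exact le_self_pow₀ this two_ne_zero

lemma one_le_I0 (z : ℝ) : 1 ≤ I0 z := by
  simpa using le_hasSum (hasSum_I0 z) 0 fun n _ => by positivity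

lemma I0_nonneg (z : ℝ) : 0 ≤ I0 z := zero_le_one.trans (one_le_I0 z)

lemma I0_mono {u v : ℝ} (hu : 0 ≤ u) (huv : u ≤ v) : I0 u ≤ I0 v :=
  hasSum_le (fun n => by gcongr) (hasSum_I0 u) (hasSum_I0 v)

lemma sq_sub_sq_div_four_le_I0_sub {u v : ℝ} (hu : 0 ≤ u) (huv : u ≤ v) :
    (v ^ 2 - u ^ 2) / 4 ≤ I0 v - I0 u := by
  have h := le_hasSum ((hasSum_I0 v).sub (hasSum_I0 u)) 1 fun n _ => sub_nonneg.2 (by gcongr)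
  simpa [sub_div] using h

lemma pow_succ_sub_pow_succ_le {a b : ℝ} (ha : 0 ≤ a) (hab : a ≤ b) (n : ℕ) :
    b ^ (n + 1) - a ^ (n + 1) ≤ (b - a) * (n + 1) * b ^ n := by
  have h := (le_abs_self _).trans (abs_pow_sub_pow_le b a (n + 1))
  rwa [abs_of_nonneg (sub_nonneg.2 hab), abs_of_nonneg ha, abs_of_nonneg (ha.trans hab),
    max_eq_left hab, Nat.add_sub_cancel, Nat.cast_succ] at h

lemma I0_sub_le {u v : ℝ} (hu : 0 ≤ u) (huv : u ≤ v) :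
    I0 v - I0 u ≤ (v ^ 2 - u ^ 2) / 4 * I0 v := by
  have h_shift := (hasSum_nat_add_iff' 1).2 ((hasSum_I0 v).sub (hasSum_I0 u))
  simp only [Finset.sum_range_one, pow_zero, sub_self, sub_zero] at h_shift
  refine hasSum_le (fun n => ?_) h_shift ((hasSum_I0 v).mul_left ((v ^ 2 - u ^ 2) / 4))
  have h_pow := pow_succ_sub_pow_succ_le (a := u ^ 2 / 4) (b := v ^ 2 / 4) (by positivity)
    (by gcongr) n
  have h_sub : 0 ≤ v ^ 2 / 4 - u ^ 2 / 4 := sub_nonneg.2 (by gcongr)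
  rw [← sub_div, n.factorial_succ, Nat.cast_mul, Nat.cast_succ, mul_pow, ← div_div,
    sub_div (v ^ 2), ← mul_div_assoc]
  gcongr
  rw [div_le_iff₀ (by positivity)]
  calc _ ≤ (v ^ 2 / 4 - u ^ 2 / 4) * (n + 1) * (v ^ 2 / 4) ^ n := h_pow
    _ ≤ (v ^ 2 / 4 - u ^ 2 / 4) * ((n : ℝ) + 1) ^ 2 * (v ^ 2 / 4) ^ n := by
        gcongr
        exact le_self_pow₀ (by linarith [n.cast_nonneg (α := ℝ)]) two_ne_zero
    _ = _ := by ring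

lemma prod_two_mul_add_one_div (n : ℕ) :
    ∏ i ∈ Finset.range n, (2 * (i : ℝ) + 1) / (2 * i + 2) =
      (2 * n).factorial / (4 ^ n * (n.factorial : ℝ) ^ 2) := by
  induction n with
  | zero => simp
  | succ n ih =>
    rw [Finset.prod_range_succ, ih, show 2 * (n + 1) = 2 * n + 1 + 1 by ring,
      Nat.factorial_succ, Nat.factorial_succ, Nat.factorial_succ]
    push_cast
    field_simp
    ring

lemma I0_eq_integral_cosh (z : ℝ) : I0 z = π⁻¹ * ∫ θ in 0..π, cosh (z * sin θ) := by
  have h_sum : HasSum (fun n : ℕ => ∫ θ in 0..π, (z * sin θ) ^ (2 * n) / (2 * n).factorial)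
      (∫ θ in 0..π, cosh (z * sin θ)) := by
    refine intervalIntegral.hasSum_integral_of_dominated_convergence
      (fun n _ => z ^ (2 * n) / (2 * n).factorial)
      (fun n => by fun_prop) (fun n => .of_forall fun θ _ => ?_)
      (.of_forall fun _ _ => (hasSum_cosh z).summable) intervalIntegrable_const
      (.of_forall fun θ _ => hasSum_cosh _)
    rw [mul_pow, norm_of_nonneg (by rw [pow_mul, pow_mul]; positivity), pow_mul (sin θ)]
    gcongr
    refine mul_le_of_le_one_right (by rw [pow_mul]; positivity) ?_
    exact pow_le_one₀ (sq_nonneg _) (sin_sq_le_one θ)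
  have h_term (n : ℕ) : π⁻¹ * ∫ θ in 0..π, (z * sin θ) ^ (2 * n) / (2 * n).factorial =
      (z ^ 2 / 4) ^ n / (n.factorial : ℝ) ^ 2 := by
    simp only [mul_pow, mul_div_right_comm, intervalIntegral.integral_const_mul]
    rw [integral_sin_pow_even, prod_two_mul_add_one_div, pow_mul, div_pow]
    field_simp
  exact (hasSum_I0 z).unique (by simpa only [h_term] using h_sum.mul_left π⁻¹)

lemma continuous_I0 : Continuous I0 := by
  rw [funext I0_eq_integral_cosh]
  exact continuous_const.mul
    (intervalIntegral.continuous_parametric_intervalIntegral_of_continuous' (by fun_prop) 0 π)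

lemma cosh_add_le_exp_mul_cosh {a b : ℝ} (hb : 0 ≤ b) : cosh (a + b) ≤ exp b * cosh a := by
  rw [cosh_add, ← cosh_add_sinh b]
  nlinarith [sinh_lt_cosh a, sinh_nonneg_iff.2 hb]

lemma I0_le_exp_sub_mul_I0 {u v : ℝ} (huv : u ≤ v) : I0 v ≤ exp (v - u) * I0 u := by
  rw [I0_eq_integral_cosh, I0_eq_integral_cosh, mul_left_comm]
  refine mul_le_mul_of_nonneg_left ?_ (inv_nonneg.2 pi_nonneg)
  rw [← intervalIntegral.integral_const_mul]
  refine intervalIntegral.integral_mono_on pi_nonneg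
    (Continuous.intervalIntegrable (by fun_prop) _ _)
    (Continuous.intervalIntegrable (by fun_prop) _ _) fun θ hθ => ?_
  have h_sin := sin_nonneg_of_mem_Icc hθ
  calc cosh (v * sin θ) = cosh (u * sin θ + (v - u) * sin θ) := by ring_nf
    _ ≤ exp ((v - u) * sin θ) * cosh (u * sin θ) :=
        cosh_add_le_exp_mul_cosh (mul_nonneg (sub_nonneg.2 huv) h_sin)
    _ ≤ exp (v - u) * cosh (u * sin θ) := by
        have := cosh_pos (u * sin θ)
        gcongr
        exact mul_le_of_le_one_right (sub_nonneg.2 huv) (sin_le_one θ)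

lemma I0_zero : I0 0 = 1 := by simp [I0_eq_integral_cosh, pi_ne_zero]

lemma I0_le_exp {z : ℝ} (hz : 0 ≤ z) : I0 z ≤ exp z := by
  simpa [I0_zero] using I0_le_exp_sub_mul_I0 hz

end BesselI0

/-! ### The free heat kernel -/

section HeatKernel

variable {t u w x y z : ℝ}

lemma pk_nonneg (ht : 0 ≤ t) : 0 ≤ pk t x y := by
  have := I0_nonneg (x * y / t)
  unfold pk
  positivity

lemma inv_mul_exp_le_pk (ht : 0 ≤ t) : t⁻¹ * exp (-(x ^ 2 + y ^ 2) / (2 * t)) ≤ pk t x y :=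
  le_mul_of_one_le_right (by positivity) (one_le_I0 _)

lemma pk_le_inv_mul_exp (ht : 0 < t) (hxy : 0 ≤ x * y) :
    pk t x y ≤ t⁻¹ * exp (-(x - y) ^ 2 / (2 * t)) := by
  calc pk t x y ≤ t⁻¹ * exp (-(x ^ 2 + y ^ 2) / (2 * t)) * exp (x * y / t) :=
        mul_le_mul_of_nonneg_left (I0_le_exp (by positivity)) (by positivity)
    _ = t⁻¹ * exp (-(x - y) ^ 2 / (2 * t)) := by
        rw [mul_assoc, ← exp_add]
        congr 2
        field_simp
        ring

lemma pk_le_inv (ht : 0 < t) (hxy : 0 ≤ x * y) : pk t x y ≤ t⁻¹ :=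
  (pk_le_inv_mul_exp ht hxy).trans <| mul_le_of_le_one_right (by positivity) <|
    exp_le_one_iff.2 (div_nonpos_of_nonpos_of_nonneg (neg_nonpos.2 (sq_nonneg _)) (by positivity))

lemma inv_mul_exp_neg_div_le {a : ℝ} (ht : 0 < t) (ha : 0 < a) :
    t⁻¹ * exp (-a / (2 * t)) ≤ 2 / a := by
  calc t⁻¹ * exp (-a / (2 * t)) = t⁻¹ * (exp (a / (2 * t)))⁻¹ := by rw [neg_div, exp_neg]
    _ ≤ t⁻¹ * (a / (2 * t))⁻¹ := by
        gcongr
        exact (lt_add_one _).le.trans (add_one_le_exp _)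
    _ = 2 / a := by field_simp

lemma pk_le_two_div_sq (ht : 0 < t) (hxy : 0 ≤ x * y) (hne : x ≠ y) :
    pk t x y ≤ 2 / (x - y) ^ 2 :=
  (pk_le_inv_mul_exp ht hxy).trans
    (inv_mul_exp_neg_div_le ht (sq_pos_iff.2 (sub_ne_zero.2 hne)))

lemma measurable_pk : Measurable fun p : ℝ × ℝ × ℝ => pk p.1 p.2.1 p.2.2 := by
  have := continuous_I0.measurable
  unfold pk
  fun_prop

lemma integral_pow_mul_exp_neg_mul_sq {b : ℝ} (hb : 0 < b) (n : ℕ) :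
    ∫ y in Set.Ioi (0 : ℝ), y ^ (2 * n + 1) * exp (-b * y ^ 2) =
      n.factorial / (2 * b ^ (n + 1)) := by
  have h := integral_rpow_mul_exp_neg_mul_rpow two_pos
    (show (-1 : ℝ) < ((2 * n + 1 : ℕ) : ℝ) by linarith [(2 * n + 1).cast_nonneg (α := ℝ)]) hb
  have h_exp : (((2 * n + 1 : ℕ) : ℝ) + 1) / 2 = n + 1 := by push_cast; ring
  simp only [rpow_natCast, rpow_two] at h
  rw [h, neg_div, h_exp, Gamma_nat_eq_factorial, rpow_neg hb.le, ← Nat.cast_succ, rpow_natCast]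
  field_simp

lemma integrableOn_pow_mul_exp_neg_mul_sq {b : ℝ} (hb : 0 < b) (n : ℕ) :
    IntegrableOn (fun y : ℝ => y ^ (2 * n + 1) * exp (-b * y ^ 2)) (Set.Ioi 0) := by
  refine Integrable.of_integral_ne_zero ?_
  rw [integral_pow_mul_exp_neg_mul_sq hb]
  positivity

lemma hasSum_pk_mul (t x y : ℝ) :
    HasSum (fun n : ℕ => t⁻¹ * exp (-x ^ 2 / (2 * t)) *
      ((x ^ 2 / (4 * t ^ 2)) ^ n / (n.factorial : ℝ) ^ 2) *
        (y ^ (2 * n + 1) * exp (-(2 * t)⁻¹ * y ^ 2))) (pk t x y * y) := by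
  have h_term (n : ℕ) : t⁻¹ * exp (-(x ^ 2 + y ^ 2) / (2 * t)) *
      (((x * y / t) ^ 2 / 4) ^ n / (n.factorial : ℝ) ^ 2) * y =
        t⁻¹ * exp (-x ^ 2 / (2 * t)) * ((x ^ 2 / (4 * t ^ 2)) ^ n / (n.factorial : ℝ) ^ 2) *
          (y ^ (2 * n + 1) * exp (-(2 * t)⁻¹ * y ^ 2)) := by
    rw [show -(x ^ 2 + y ^ 2) / (2 * t) = -x ^ 2 / (2 * t) + -(2 * t)⁻¹ * y ^ 2 by ring, exp_add,
      show (x * y / t) ^ 2 / 4 = x ^ 2 / (4 * t ^ 2) * y ^ 2 by ring, mul_pow]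
    ring
  rw [← funext h_term, pk]
  exact ((hasSum_I0 (x * y / t)).mul_left (t⁻¹ * exp (-(x ^ 2 + y ^ 2) / (2 * t)))).mul_right y

lemma hasSum_integral_pk_mul (ht : 0 < t) :
    HasSum (fun n : ℕ => exp (-x ^ 2 / (2 * t)) * ((x ^ 2 / (2 * t)) ^ n / n.factorial))
      (∫ y in Set.Ioi 0, pk t x y * y) := by
  have hb : 0 < (2 * t)⁻¹ := by positivity
  set F : ℕ → ℝ → ℝ := fun n y => t⁻¹ * exp (-x ^ 2 / (2 * t)) *
    ((x ^ 2 / (4 * t ^ 2)) ^ n / (n.factorial : ℝ) ^ 2) *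
      (y ^ (2 * n + 1) * exp (-(2 * t)⁻¹ * y ^ 2))
  have h_int (n : ℕ) : ∫ y in Set.Ioi 0, F n y =
      exp (-x ^ 2 / (2 * t)) * ((x ^ 2 / (2 * t)) ^ n / n.factorial) := by
    rw [integral_const_mul, integral_pow_mul_exp_neg_mul_sq hb,
      show x ^ 2 / (4 * t ^ 2) = (2 * t)⁻¹ * (x ^ 2 / (2 * t)) by field_simp; norm_num, mul_pow,
      inv_pow, inv_pow]
    field_simp
    ring
  have h_norm (n : ℕ) : ∫ y in Set.Ioi 0, ‖F n y‖ = ∫ y in Set.Ioi 0, F n y :=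
    setIntegral_congr_fun measurableSet_Ioi fun y hy => by
      have : 0 < y := hy
      exact norm_of_nonneg (by positivity)
  have h := hasSum_integral_of_summable_integral_norm (F := F)
    (fun n => (integrableOn_pow_mul_exp_neg_mul_sq hb n).const_mul _)
    (by simpa only [h_norm, h_int] using (summable_pow_div_factorial _).mul_left _)
  simpa only [h_int, F, (hasSum_pk_mul t x _).tsum_eq] using h

lemma integral_pk_mul (ht : 0 < t) : ∫ y in Set.Ioi 0, pk t x y * y = 1 := by
  have h_exp := (NormedSpace.expSeries_div_hasSum_exp (x ^ 2 / (2 * t))).mul_left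
    (exp (-x ^ 2 / (2 * t)))
  rw [← exp_eq_exp_ℝ, ← exp_add, neg_div, neg_add_cancel, exp_zero] at h_exp
  exact (hasSum_integral_pk_mul ht).unique (by simpa only [neg_div] using h_exp)

lemma integrableOn_pk_mul (ht : 0 < t) : IntegrableOn (fun y => pk t x y * y) (Set.Ioi 0) :=
  Integrable.of_integral_ne_zero (by rw [integral_pk_mul ht]; exact one_ne_zero)

lemma one_sub_inv_le_setIntegral_pk_mul (ht : 0 < t) (hx : 0 ≤ x) :
    1 - t⁻¹ ≤ ∫ y in Set.Ioi 1, pk t x y * y := by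
  have h_int : IntegrableOn (fun y => pk t x y * y) (Set.Ioi 0) := integrableOn_pk_mul ht
  have h_near : ∫ y in Set.Ioc 0 1, pk t x y * y ≤ t⁻¹ :=
    calc ∫ y in Set.Ioc 0 1, pk t x y * y ≤ ∫ _ in Set.Ioc (0 : ℝ) 1, t⁻¹ :=
          setIntegral_mono_on (h_int.mono_set Set.Ioc_subset_Ioi_self) (integrable_const _)
            measurableSet_Ioc fun y hy =>
              (mul_le_of_le_one_right (pk_nonneg ht.le) hy.2).trans
                (pk_le_inv ht (mul_nonneg hx hy.1.le))
      _ = t⁻¹ := by simp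
  have h_split := integral_pk_mul (x := x) ht
  rw [← Set.Ioc_union_Ioi_eq_Ioi zero_le_one, setIntegral_union Set.Ioc_disjoint_Ioi_same
    measurableSet_Ioi (h_int.mono_set Set.Ioc_subset_Ioi_self)
    (h_int.mono_set (Set.Ioi_subset_Ioi zero_le_one))] at h_split
  linarith

lemma pk_mul_one_sub_le_pk_sub (hu : 0 ≤ u) (hus : u ≤ t / 2) (ht : 0 < t) (hxy : 0 ≤ x * y) :
    pk t x y * (1 - (x ^ 2 + y ^ 2) / t ^ 2 * u) ≤ pk (t - u) x y := by
  have htu : 0 < t - u := by linarith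
  set δ := (x ^ 2 + y ^ 2) * u / (2 * t * (t - u)) with hδ
  have h_δ : δ ≤ (x ^ 2 + y ^ 2) / t ^ 2 * u := by
    rw [hδ, div_mul_eq_mul_div]
    gcongr
    nlinarith
  have h_exp : 1 - (x ^ 2 + y ^ 2) / t ^ 2 * u ≤ exp (-δ) := by linarith [add_one_le_exp (-δ)]
  have h_add : -(x ^ 2 + y ^ 2) / (2 * t) + -δ = -(x ^ 2 + y ^ 2) / (2 * (t - u)) := by
    rw [hδ]; field_simp; ring
  have h_I0 : I0 (x * y / t) ≤ I0 (x * y / (t - u)) :=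
    I0_mono (by positivity) (by gcongr; linarith)
  have h_nonneg := I0_nonneg (x * y / t)
  calc pk t x y * (1 - (x ^ 2 + y ^ 2) / t ^ 2 * u) ≤ pk t x y * exp (-δ) :=
        mul_le_mul_of_nonneg_left h_exp (pk_nonneg ht.le)
    _ = t⁻¹ * exp (-(x ^ 2 + y ^ 2) / (2 * (t - u))) * I0 (x * y / t) := by
        rw [← h_add, exp_add, pk]; ring
    _ ≤ pk (t - u) x y := by
        unfold pk
        gcongr
        linarith

lemma inv_sub_le_inv_mul_exp (hut : u < t) (ht : 0 < t) :
    (t - u)⁻¹ ≤ t⁻¹ * exp (u / (t - u)) := by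
  have htu : 0 < t - u := sub_pos.2 hut
  calc (t - u)⁻¹ = t⁻¹ * (u / (t - u) + 1) := by field_simp; ring
    _ ≤ t⁻¹ * exp (u / (t - u)) := by gcongr; exact add_one_le_exp _

lemma pk_sub_le_pk_mul_exp (hu : 0 ≤ u) (hut : u < t) (hxy : 0 ≤ x * y)
    (h_far : 4 * t ≤ (x - y) ^ 2) :
    pk (t - u) x y ≤ pk t x y * exp (-(u * (x - y) ^ 2 / (4 * t ^ 2))) := by
  have ht : 0 < t := hu.trans_lt hut
  have htu : 0 < t - u := sub_pos.2 hut
  have h_I0 : I0 (x * y / (t - u)) ≤ exp (x * y / (t - u) - x * y / t) * I0 (x * y / t) :=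
    I0_le_exp_sub_mul_I0 (by gcongr; linarith)
  have h_exponent : u / (t - u) + -(x ^ 2 + y ^ 2) / (2 * (t - u)) +
      (x * y / (t - u) - x * y / t) ≤
        -(x ^ 2 + y ^ 2) / (2 * t) + -(u * (x - y) ^ 2 / (4 * t ^ 2)) := by
    have h_eq : u / (t - u) + -(x ^ 2 + y ^ 2) / (2 * (t - u)) + (x * y / (t - u) - x * y / t) -
        -(x ^ 2 + y ^ 2) / (2 * t) = u / (t - u) * (1 - (x - y) ^ 2 / (2 * t)) := by
      field_simp; ring
    have h_half : (x - y) ^ 2 / (2 * t) = 2 * ((x - y) ^ 2 / (4 * t)) := by field_simp; ring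
    have h_one : 1 ≤ (x - y) ^ 2 / (4 * t) := (one_le_div (by positivity)).2 h_far
    have h_mul : u * (x - y) ^ 2 / (4 * t ^ 2) ≤ u / (t - u) * ((x - y) ^ 2 / (4 * t)) := by
      calc u * (x - y) ^ 2 / (4 * t ^ 2) = u / t * ((x - y) ^ 2 / (4 * t)) := by field_simp
        _ ≤ u / (t - u) * ((x - y) ^ 2 / (4 * t)) := by gcongr; linarith
    have h_ratio : 0 ≤ u / (t - u) := by positivity
    nlinarith
  have h₀ := I0_nonneg (x * y / t)
  have h₁ := I0_nonneg (x * y / (t - u))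
  calc pk (t - u) x y ≤ t⁻¹ * exp (u / (t - u)) * exp (-(x ^ 2 + y ^ 2) / (2 * (t - u))) *
        (exp (x * y / (t - u) - x * y / t) * I0 (x * y / t)) := by
        unfold pk; gcongr; exact inv_sub_le_inv_mul_exp hut ht
    _ = t⁻¹ * exp (u / (t - u) + -(x ^ 2 + y ^ 2) / (2 * (t - u)) +
          (x * y / (t - u) - x * y / t)) * I0 (x * y / t) := by
        rw [exp_add, exp_add]; ring
    _ ≤ t⁻¹ * exp (-(x ^ 2 + y ^ 2) / (2 * t) + -(u * (x - y) ^ 2 / (4 * t ^ 2))) *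
          I0 (x * y / t) := by gcongr
    _ = pk t x y * exp (-(u * (x - y) ^ 2 / (4 * t ^ 2))) := by rw [exp_add, pk]; ring

lemma pk_sub_pk_le (ht : 0 < t) (hz : 0 ≤ z) (hzy : z ≤ y) (hw : 0 ≤ w) :
    pk t y w - pk t z w ≤
      t⁻¹ * exp (-w ^ 2 / (2 * t) + y * w / t) * ((y ^ 2 - z ^ 2) * w ^ 2 / (4 * t ^ 2)) := by
  have hy : 0 ≤ y := hz.trans hzy
  have h_arg : z * w / t ≤ y * w / t := by gcongr
  have h_sub : I0 (y * w / t) - I0 (z * w / t) ≤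
      (y ^ 2 - z ^ 2) * w ^ 2 / (4 * t ^ 2) * exp (y * w / t) := by
    refine (I0_sub_le (by positivity) h_arg).trans ?_
    rw [show ((y * w / t) ^ 2 - (z * w / t) ^ 2) / 4 = (y ^ 2 - z ^ 2) * w ^ 2 / (4 * t ^ 2) by
      field_simp]
    have : 0 ≤ y ^ 2 - z ^ 2 := sub_nonneg.2 (by gcongr)
    gcongr
    exact I0_le_exp (by positivity)
  have h_nonneg := sub_nonneg.2 (I0_mono (by positivity) h_arg)
  have h₀ := I0_nonneg (y * w / t)
  calc pk t y w - pk t z w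
      ≤ t⁻¹ * exp (-(z ^ 2 + w ^ 2) / (2 * t)) * I0 (y * w / t) - pk t z w := by
        unfold pk; gcongr
    _ = t⁻¹ * exp (-(z ^ 2 + w ^ 2) / (2 * t)) * (I0 (y * w / t) - I0 (z * w / t)) := by
        unfold pk; ring
    _ ≤ t⁻¹ * exp (-w ^ 2 / (2 * t)) *
          ((y ^ 2 - z ^ 2) * w ^ 2 / (4 * t ^ 2) * exp (y * w / t)) := by
        gcongr
        linarith [sq_nonneg z]
    _ = _ := by rw [exp_add]; ring

-- The Gaussian loss `exp δ` is beaten by the quadratic term of the series of `I₀`.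
lemma pk_le_pk_of_exp_le (ht : 0 < t) (hz : 0 ≤ z) (hzy : z ≤ y) (hx : 0 ≤ x) (hzx : z * x ≤ t)
    (h : 3 * exp ((y ^ 2 - z ^ 2) / (2 * t)) ≤ x ^ 2 / (2 * t)) : pk t z x ≤ pk t y x := by
  set δ := (y ^ 2 - z ^ 2) / (2 * t) with hδ
  have hδ₀ : 0 ≤ δ := div_nonneg (sub_nonneg.2 (by gcongr)) (by positivity)
  have h_three : I0 (z * x / t) ≤ 3 :=
    calc I0 (z * x / t) ≤ exp (z * x / t) := I0_le_exp (by positivity)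
      _ ≤ exp 1 := exp_le_exp.2 ((div_le_one ht).2 hzx)
      _ ≤ 3 := exp_one_lt_three.le
  have h_exp : exp δ ≤ 1 + δ * exp δ := by
    have h_mul : exp δ * exp (-δ) = 1 := by rw [← exp_add, add_neg_cancel, exp_zero]
    nlinarith [exp_pos δ, add_one_le_exp (-δ)]
  have h_I0 : δ * (x ^ 2 / (2 * t)) ≤ I0 (y * x / t) - I0 (z * x / t) := by
    refine le_trans (le_of_eq ?_) (sq_sub_sq_div_four_le_I0_sub (by positivity)
      (show z * x / t ≤ y * x / t by gcongr))
    rw [hδ]; field_simp; ring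
  have h_nonneg := I0_nonneg (z * x / t)
  have h_key : exp δ * I0 (z * x / t) ≤ I0 (y * x / t) := by
    calc exp δ * I0 (z * x / t) ≤ (1 + δ * exp δ) * I0 (z * x / t) := by gcongr
      _ = I0 (z * x / t) + δ * exp δ * I0 (z * x / t) := by ring
      _ ≤ I0 (z * x / t) + δ * exp δ * 3 := by gcongr
      _ = I0 (z * x / t) + δ * (3 * exp δ) := by ring
      _ ≤ I0 (z * x / t) + δ * (x ^ 2 / (2 * t)) := by gcongr
      _ ≤ I0 (y * x / t) := by linarith
  have h_split : -(z ^ 2 + x ^ 2) / (2 * t) = -(y ^ 2 + x ^ 2) / (2 * t) + δ := by rw [hδ]; ring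
  calc pk t z x = t⁻¹ * exp (-(y ^ 2 + x ^ 2) / (2 * t)) * (exp δ * I0 (z * x / t)) := by
        rw [pk, h_split, exp_add]; ring
    _ ≤ pk t y x := by unfold pk; gcongr

end HeatKernel

/-! ### The survival profile -/

section Profiles

/-- Two-sided profile, in hypothesis (Surv), of the probability that the Bessel process started
at `x` has not hit `1` by time `t`. -/
noncomputable def survivalProfile (x t : ℝ) : ℝ := min 1 (log x / log (1 + √t))

variable {r s t x : ℝ}

lemma log_one_add_sqrt_pos (ht : 0 < t) : 0 < log (1 + √t) :=
  log_pos (lt_add_of_pos_right 1 (sqrt_pos.2 ht))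

lemma survivalProfile_pos (ht : 0 < t) (hx : 1 < x) : 0 < survivalProfile x t :=
  lt_min one_pos (div_pos (log_pos hx) (log_one_add_sqrt_pos ht))

lemma survivalProfile_le_one : survivalProfile x t ≤ 1 := min_le_left _ _

lemma survivalProfile_anti (hr : 0 < r) (hrs : r ≤ s) (hx : 1 < x) :
    survivalProfile x s ≤ survivalProfile x r := by
  have := log_pos hx
  have := log_one_add_sqrt_pos hr
  unfold survivalProfile
  gcongr

lemma log_one_add_sqrt_le (hr : 0 < r) (hrs : r ≤ s) :
    log (1 + √s) ≤ √(s / r) * log (1 + √r) := by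
  have h_one : 1 ≤ √(s / r) := one_le_sqrt.2 ((one_le_div hr).2 hrs)
  have h_mul : √(s / r) * √r = √s := by
    rw [← sqrt_mul (div_nonneg (hr.le.trans hrs) hr.le), div_mul_cancel₀ _ hr.ne']
  have h_bernoulli := one_add_mul_self_le_rpow_one_add (s := √r)
    (by linarith [sqrt_nonneg r]) h_one
  rw [h_mul] at h_bernoulli
  rw [← log_rpow (by positivity)]
  exact log_le_log (by positivity) h_bernoulli

lemma survivalProfile_le_sqrt_mul (hr : 0 < r) (hrs : r ≤ s) (hx : 1 < x) :
    survivalProfile x r ≤ √(s / r) * survivalProfile x s := by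
  have hs := hr.trans_le hrs
  have h_log := log_pos hx
  unfold survivalProfile
  rw [mul_min_of_nonneg _ _ (sqrt_nonneg _), mul_one]
  refine min_le_min (one_le_sqrt.2 ((one_le_div hr).2 hrs)) ?_
  rw [div_le_iff₀ (log_one_add_sqrt_pos hr), mul_comm √(s / r), mul_assoc, div_mul_eq_mul_div,
    le_div_iff₀ (log_one_add_sqrt_pos hs)]
  exact mul_le_mul_of_nonneg_left (log_one_add_sqrt_le hr hrs) h_log.le

end Profiles

/-! ### The hitting density -/

/-- The part of `BesselHK` that governs the small-`xy` regime: `p₁` is the kernel killed at `1`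
and `q` the hitting density, with the constants `a` and `A` of the survival estimate made
explicit and only the lower half of (AC). -/
structure KilledBesselKernel (p₁ : ℝ → ℝ → ℝ → ℝ) (q : ℝ → ℝ → ℝ) (a A : ℝ) : Prop where
  q_nonneg : ∀ ⦃x s : ℝ⦄, 1 < x → 0 < s → 0 ≤ q x s
  hunt : ∀ ⦃t x y : ℝ⦄, 0 < t → 1 < x → 1 < y →
    p₁ t x y = pk t x y - ∫ u in Set.Ioo 0 t, q x u * pk (t - u) 1 y
  symm : ∀ ⦃t x y : ℝ⦄, 0 < t → 1 < x → 1 < y → p₁ t x y = p₁ t y x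
  ck : ∀ ⦃t s x y : ℝ⦄, 0 < t → 0 < s → 1 < x → 1 < y →
    p₁ (t + s) x y = ∫ w in Set.Ioi 1, p₁ t x w * p₁ s w y * w
  mass : ∀ ⦃t x : ℝ⦄, 0 < t → 1 < x →
    ∫ y in Set.Ioi 1, p₁ t x y * y = ∫ u in Set.Ioi t, q x u
  a_pos : 0 < a
  le_tail : ∀ ⦃t x : ℝ⦄, 0 < t → 1 < x → a * survivalProfile x t ≤ ∫ u in Set.Ioi t, q x u
  tail_le : ∀ ⦃t x : ℝ⦄, 0 < t → 1 < x → ∫ u in Set.Ioi t, q x u ≤ A * survivalProfile x t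
  sqrt_mul_hker_le : ∀ ⦃t x y : ℝ⦄, 0 < t → 1 < x → 1 < y → √(x * y) * hker t x y ≤ p₁ t x y

lemma BesselHK.exists_killedBesselKernel {p₁ : ℝ → ℝ → ℝ → ℝ} {q : ℝ → ℝ → ℝ}
    (H : BesselHK p₁ q) : ∃ a A : ℝ, KilledBesselKernel p₁ q a A := by
  obtain ⟨a, A, ha, -, h_surv⟩ := H.surv
  exact ⟨a, A, H.q_nonneg, H.hunt, H.symm, H.ck, H.mass, ha, fun t x ht hx => (h_surv ht hx).1,
    fun t x ht hx => (h_surv ht hx).2, fun t x y ht hx hy => (H.ac ht hx hy).1⟩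

lemma hker_pos {t x y : ℝ} (ht : 0 < t) (hx : 1 < x) (hy : 1 < y) : 0 < hker t x y := by
  have h_exp : 0 < exp (-(x - y) ^ 2 / (2 * t)) - exp (-(x + y - 2) ^ 2 / (2 * t)) := by
    refine sub_pos.2 (exp_lt_exp.2 (div_lt_div_of_pos_right ?_ (by positivity)))
    nlinarith [mul_pos (sub_pos.2 hx) (sub_pos.2 hy)]
  unfold hker
  positivity

namespace KilledBesselKernel

variable {p₁ : ℝ → ℝ → ℝ → ℝ} {q : ℝ → ℝ → ℝ} {a A s t x y : ℝ}

lemma pos (H : KilledBesselKernel p₁ q a A) (ht : 0 < t) (hx : 1 < x) (hy : 1 < y) :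
    0 < p₁ t x y := by
  have := hker_pos ht hx hy
  exact lt_of_lt_of_le (by positivity) (H.sqrt_mul_hker_le ht hx hy)

lemma tail_pos (H : KilledBesselKernel p₁ q a A) (ht : 0 < t) (hx : 1 < x) :
    0 < ∫ u in Set.Ioi t, q x u :=
  (mul_pos H.a_pos (survivalProfile_pos ht hx)).trans_le (H.le_tail ht hx)

lemma A_pos (H : KilledBesselKernel p₁ q a A) : 0 < A :=
  pos_of_mul_pos_left ((H.tail_pos one_pos one_lt_two).trans_le (H.tail_le one_pos one_lt_two))
    (survivalProfile_pos one_pos one_lt_two).le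

lemma integrableOn_tail (H : KilledBesselKernel p₁ q a A) (ht : 0 < t) (hx : 1 < x) :
    IntegrableOn (q x) (Set.Ioi t) :=
  Integrable.of_integral_ne_zero (H.tail_pos ht hx).ne'

lemma integrableOn_mul (H : KilledBesselKernel p₁ q a A) (ht : 0 < t) (hx : 1 < x) :
    IntegrableOn (fun y => p₁ t x y * y) (Set.Ioi 1) :=
  Integrable.of_integral_ne_zero (by rw [H.mass ht hx]; exact (H.tail_pos ht hx).ne')

lemma integrableOn_q (H : KilledBesselKernel p₁ q a A) (hx : 1 < x) :
    IntegrableOn (q x) (Set.Ioi 0) := by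
  have h_restrict (n : ℕ) : (volume.restrict (Set.Ioi (0 : ℝ))).restrict
      (Set.Ioi (1 / ((n : ℝ) + 1))) = volume.restrict (Set.Ioi (1 / ((n : ℝ) + 1))) := by
    rw [Measure.restrict_restrict measurableSet_Ioi,
      Set.inter_eq_left.2 (Set.Ioi_subset_Ioi (by positivity))]
  refine (aecover_Ioi_of_Ioi tendsto_one_div_add_atTop_nhds_zero_nat
    ).integrable_of_integral_bounded_of_nonneg_ae A (fun n => ?_) ?_ (.of_forall fun n => ?_)
  · rw [IntegrableOn, h_restrict]
    exact H.integrableOn_tail (by positivity) hx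
  · exact (ae_restrict_mem measurableSet_Ioi).mono fun u hu => H.q_nonneg hx hu
  · rw [h_restrict]
    exact (H.tail_le (by positivity) hx).trans
      (mul_le_of_le_one_right H.A_pos.le survivalProfile_le_one)

lemma integrableOn_hunt (H : KilledBesselKernel p₁ q a A) (hx : 1 < x) (hy : 1 < y) :
    IntegrableOn (fun u => q x u * pk (t - u) 1 y) (Set.Ioo 0 t) := by
  refine Integrable.mul_bdd (c := 2 / (1 - y) ^ 2)
    ((H.integrableOn_q hx).mono_set Set.Ioo_subset_Ioi_self)
    (measurable_pk.comp (f := fun u => (t - u, (1 : ℝ), y)) (by fun_prop)).aestronglyMeasurable ?_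
  filter_upwards [ae_restrict_mem measurableSet_Ioo] with u hu
  have htu : 0 < t - u := sub_pos.2 hu.2
  rw [norm_of_nonneg (pk_nonneg htu.le)]
  exact pk_le_two_div_sq htu (by linarith) hy.ne

lemma setIntegral_Ioo_add_tail (H : KilledBesselKernel p₁ q a A) (hs : 0 ≤ s) (hx : 1 < x) :
    (∫ u in Set.Ioo 0 s, q x u) + ∫ u in Set.Ioi s, q x u = ∫ u in Set.Ioi 0, q x u := by
  have h_int := H.integrableOn_q hx
  rw [← integral_Ioc_eq_integral_Ioo, ← setIntegral_union Set.Ioc_disjoint_Ioi_same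
    measurableSet_Ioi (h_int.mono_set Set.Ioc_subset_Ioi_self)
    (h_int.mono_set (Set.Ioi_subset_Ioi hs)), Set.Ioc_union_Ioi_eq_Ioi hs]

-- Positivity of `p₁ t x 2` in Hunt's formula; the endpoint `2` is arbitrary.
lemma exp_mul_setIntegral_le_one (H : KilledBesselKernel p₁ q a A) (hx : 1 < x) (hs : 0 ≤ s)
    (hst : s < t) : exp (-5 / (2 * (t - s))) * ∫ u in Set.Ioo 0 s, q x u ≤ 1 := by
  have ht : 0 < t := hs.trans_lt hst
  have h_sub : Set.Ioo 0 s ⊆ Set.Ioo 0 t := Set.Ioo_subset_Ioo_right hst.le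
  have h_q : IntegrableOn (q x) (Set.Ioo 0 s) :=
    (H.integrableOn_q hx).mono_set Set.Ioo_subset_Ioi_self
  have h_kernel : ∀ u ∈ Set.Ioo 0 s, t⁻¹ * exp (-5 / (2 * (t - s))) ≤ pk (t - u) 1 2 :=
    fun u hu => by
      have := hu.1
      have := hu.2
      have htu : 0 < t - u := by linarith
      refine le_trans ?_ (inv_mul_exp_le_pk htu.le)
      rw [show (1 : ℝ) ^ 2 + 2 ^ 2 = 5 by norm_num, neg_div, neg_div]
      gcongr
      all_goals linarith
  have h_le : t⁻¹ * exp (-5 / (2 * (t - s))) * ∫ u in Set.Ioo 0 s, q x u ≤ t⁻¹ :=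
    calc t⁻¹ * exp (-5 / (2 * (t - s))) * ∫ u in Set.Ioo 0 s, q x u
        = ∫ u in Set.Ioo 0 s, t⁻¹ * exp (-5 / (2 * (t - s))) * q x u :=
          (integral_const_mul _ _).symm
      _ ≤ ∫ u in Set.Ioo 0 s, q x u * pk (t - u) 1 2 :=
          setIntegral_mono_on (h_q.const_mul _) ((H.integrableOn_hunt hx one_lt_two).mono_set h_sub)
            measurableSet_Ioo fun u hu => by
              rw [mul_comm]
              exact mul_le_mul_of_nonneg_left (h_kernel u hu) (H.q_nonneg hx hu.1)
      _ ≤ ∫ u in Set.Ioo 0 t, q x u * pk (t - u) 1 2 :=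
          setIntegral_mono_set (H.integrableOn_hunt hx one_lt_two)
            ((ae_restrict_mem measurableSet_Ioo).mono fun u hu =>
              mul_nonneg (H.q_nonneg hx hu.1) (pk_nonneg (sub_pos.2 hu.2).le)) h_sub.eventuallyLE
      _ ≤ pk t x 2 := by linarith [H.hunt ht hx one_lt_two, H.pos ht hx one_lt_two]
      _ ≤ t⁻¹ := pk_le_inv ht (by linarith)
  rwa [mul_assoc, mul_le_iff_le_one_right (inv_pos.2 ht)] at h_le

lemma integral_q_le_one (H : KilledBesselKernel p₁ q a A) (hx : 1 < x) :
    ∫ u in Set.Ioi 0, q x u ≤ 1 := by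
  refine le_of_tendsto (intervalIntegral_tendsto_integral_Ioi 0 (H.integrableOn_q hx)
    Filter.tendsto_id) ((Filter.eventually_ge_atTop 0).mono fun s hs => ?_)
  rw [id, intervalIntegral.integral_of_le hs, integral_Ioc_eq_integral_Ioo]
  have h_exp : Filter.Tendsto (fun r : ℝ => exp (-5 / (2 * r))) Filter.atTop (nhds 1) := by
    have h_lin : Filter.Tendsto (fun r : ℝ => 2 * r) Filter.atTop Filter.atTop :=
      Filter.tendsto_id.const_mul_atTop two_pos
    simpa using (h_lin.const_div_atTop (-5)).rexp
  have h_mul := h_exp.mul_const (∫ u in Set.Ioo 0 s, q x u)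
  rw [one_mul] at h_mul
  refine le_of_tendsto h_mul ((Filter.eventually_gt_atTop 0).mono fun r hr => ?_)
  simpa only [add_sub_cancel_left] using
    H.exp_mul_setIntegral_le_one hx hs (lt_add_of_pos_right s hr)

lemma setIntegral_hunt_le (H : KilledBesselKernel p₁ q a A) (hx : 1 < x) :
    ∫ y in Set.Ioi 1, ∫ u in Set.Ioo 0 t, q x u * (pk (t - u) 1 y * y) ≤
      ∫ u in Set.Ioo 0 t, q x u := by
  have h_ae : ∀ᵐ u ∂volume.restrict (Set.Ioo 0 t), u ∈ Set.Ioo 0 t :=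
    ae_restrict_mem measurableSet_Ioo
  have h_sub : Set.Ioi (1 : ℝ) ⊆ Set.Ioi 0 := Set.Ioi_subset_Ioi zero_le_one
  have h_nonneg : ∀ u ∈ Set.Ioo 0 t, ∀ y ∈ Set.Ioi (0 : ℝ), 0 ≤ pk (t - u) 1 y * y :=
    fun u hu y hy => mul_nonneg (pk_nonneg (sub_pos.2 hu.2).le) (Set.mem_Ioi.1 hy).le
  refine integral_integral_mul_le_integral ((H.integrableOn_q hx).mono_set Set.Ioo_subset_Ioi_self)
    (h_ae.mono fun u hu => H.q_nonneg hx hu.1) ?_ (h_ae.mono fun u hu => ?_)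
    (h_ae.mono fun u hu => ?_) (h_ae.mono fun u hu => ?_)
  · have : Measurable fun p : ℝ × ℝ => pk (t - p.2) 1 p.1 :=
      measurable_pk.comp (f := fun p : ℝ × ℝ => (t - p.2, (1 : ℝ), p.1)) (by fun_prop)
    exact (this.mul measurable_fst).aestronglyMeasurable
  · exact (ae_restrict_mem measurableSet_Ioi).mono fun y hy => h_nonneg u hu y (h_sub hy)
  · exact (integrableOn_pk_mul (sub_pos.2 hu.2)).mono_set h_sub
  · exact (setIntegral_mono_set (integrableOn_pk_mul (sub_pos.2 hu.2))
      ((ae_restrict_mem measurableSet_Ioi).mono (h_nonneg u hu)) h_sub.eventuallyLE).trans_eq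
      (integral_pk_mul (sub_pos.2 hu.2))

lemma one_sub_inv_le_integral_q (H : KilledBesselKernel p₁ q a A) (ht : 0 < t) (hx : 1 < x) :
    1 - t⁻¹ ≤ ∫ u in Set.Ioi 0, q x u := by
  have hx₀ : 0 ≤ x := zero_le_one.trans hx.le
  have h_pk : IntegrableOn (fun y => pk t x y * y) (Set.Ioi 1) :=
    (integrableOn_pk_mul ht).mono_set (Set.Ioi_subset_Ioi zero_le_one)
  have h_hunt : Set.EqOn (fun y => ∫ u in Set.Ioo 0 t, q x u * (pk (t - u) 1 y * y))
      (fun y => pk t x y * y - p₁ t x y * y) (Set.Ioi 1) := fun y hy => by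
    simp only [← mul_assoc, integral_mul_const, H.hunt ht hx hy]
    ring
  have h_le := H.setIntegral_hunt_le (t := t) hx
  rw [setIntegral_congr_fun measurableSet_Ioi h_hunt, integral_sub h_pk (H.integrableOn_mul ht hx),
    H.mass ht hx] at h_le
  linarith [one_sub_inv_le_setIntegral_pk_mul ht hx₀, H.setIntegral_Ioo_add_tail ht.le hx]

lemma integral_q (H : KilledBesselKernel p₁ q a A) (hx : 1 < x) :
    ∫ u in Set.Ioi 0, q x u = 1 := by
  refine (H.integral_q_le_one hx).antisymm ?_
  have h_lim : Filter.Tendsto (fun t : ℝ => 1 - t⁻¹) Filter.atTop (nhds 1) := by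
    simpa using tendsto_inv_atTop_zero.const_sub (1 : ℝ)
  exact le_of_tendsto h_lim
    ((Filter.eventually_gt_atTop 0).mono fun t ht => H.one_sub_inv_le_integral_q ht hx)

lemma integral_mul_min_le (H : KilledBesselKernel p₁ q a A) (hs : 0 < s) (hx : 1 < x) :
    ∫ u in Set.Ioi 0, q x u * min u s ≤ 2 * A * s * survivalProfile x s := by
  have h_tail : ∀ r ∈ Set.Ioo 0 s,
      ∫ u in Set.Ioi r, q x u ≤ A * survivalProfile x s * √(s / r) := fun r hr =>
    calc ∫ u in Set.Ioi r, q x u ≤ A * survivalProfile x r := H.tail_le hr.1 hx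
      _ ≤ A * (√(s / r) * survivalProfile x s) :=
          mul_le_mul_of_nonneg_left (survivalProfile_le_sqrt_mul hr.1 hr.2.le hx) H.A_pos.le
      _ = A * survivalProfile x s * √(s / r) := by ring
  calc ∫ u in Set.Ioi 0, q x u * min u s = ∫ r in Set.Ioo 0 s, ∫ u in Set.Ioi r, q x u :=
        setIntegral_mul_min_eq_setIntegral_tail hs.le (H.integrableOn_q hx)
    _ ≤ ∫ r in Set.Ioo 0 s, A * survivalProfile x s * √(s / r) :=
        setIntegral_mono_on (integrableOn_setIntegral_Ioi (H.integrableOn_q hx))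
          ((integrableOn_sqrt_div hs.le).const_mul _) measurableSet_Ioo h_tail
    _ = 2 * A * s * survivalProfile x s := by
        rw [integral_const_mul, integral_sqrt_div hs.le]
        ring

end KilledBesselKernel

/-! ### The logarithmic correction -/

lemma log_le_natCast_mul_log {a b : ℝ} {n : ℕ} (ha : 0 < a) (hab : a ≤ b ^ n) :
    log a ≤ n * log b := by
  rw [← log_pow]
  exact log_le_log ha hab

section LogRatio

/-- The logarithm by which `log x` is divided in the two-sided estimate for `x * y ≤ t`. -/
noncomputable def logRatio (t x : ℝ) : ℝ := log (3 * t / (x + √t))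

/-- The two-sided profile of the killed heat kernel for `x * y ≤ t`. -/
noncomputable def smallProfile (t x y : ℝ) : ℝ :=
  log x * log y * (logRatio t x * logRatio t y)⁻¹ * t⁻¹ * exp (-(x ^ 2 + y ^ 2) / (2 * t))

variable {t x y : ℝ}

lemma log_three_half_le_logRatio (ht : 1 ≤ t) (hx : 0 < x) (hxt : x ≤ t) :
    log (3 / 2) ≤ logRatio t x := by
  have ht₀ : 0 < t := zero_lt_one.trans_le ht
  have h_sqrt : √t ≤ t := (sqrt_le_left ht₀.le).2 (by nlinarith)
  refine log_le_log (by norm_num) ?_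
  rw [div_le_div_iff₀ two_pos (by positivity)]
  linarith

lemma logRatio_pos (ht : 1 ≤ t) (hx : 0 < x) (hxt : x ≤ t) : 0 < logRatio t x :=
  (log_pos (by norm_num)).trans_le (log_three_half_le_logRatio ht hx hxt)

lemma logRatio_le_log_mul_sqrt (ht : 0 < t) (hx : 0 < x) : logRatio t x ≤ log (3 * √t) := by
  refine log_le_log (by positivity) ((div_le_iff₀ (by positivity)).2 ?_)
  nlinarith [mul_self_sqrt ht.le, mul_pos hx (sqrt_pos.2 ht)]

lemma logRatio_le_log_mul_div (ht : 0 < t) (hx : 0 < x) : logRatio t x ≤ log (3 * (t / x)) := by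
  rw [← mul_div_assoc]
  exact log_le_log (by positivity) (by gcongr; exact le_add_of_nonneg_right (sqrt_nonneg t))

lemma smallProfile_comm : smallProfile t x y = smallProfile t y x := by
  unfold smallProfile
  ring_nf

lemma smallProfile_nonneg (hx : 1 < x) (hy : 1 < y) (hxt : x ≤ t) (hyt : y ≤ t) :
    0 ≤ smallProfile t x y := by
  have ht : 1 < t := hx.trans_le hxt
  have := logRatio_pos ht.le (zero_lt_one.trans hx) hxt
  have := logRatio_pos ht.le (zero_lt_one.trans hy) hyt
  have := log_pos hx
  have := log_pos hy
  unfold smallProfile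
  positivity

lemma survivalProfile_div_four_le (hx : 1 < x) (hxt : x ≤ t) :
    survivalProfile x (t / 4) ≤ 3 * (log x / logRatio t x) := by
  have ht : 0 < t := by linarith
  have hx₀ : 0 < x := zero_lt_one.trans hx
  have h_log : logRatio t x ≤ 3 * log (1 + √(t / 4)) := by
    refine (logRatio_le_log_mul_sqrt ht hx₀).trans
      (log_le_natCast_mul_log (n := 3) (by positivity) ?_)
    have h_half : √(t / 4) = √t / 2 := by
      rw [sqrt_div ht.le, show (4 : ℝ) = 2 ^ 2 by norm_num, sqrt_sq two_pos.le]
    rw [h_half]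
    nlinarith [sq_nonneg (√t - 1), pow_pos (sqrt_pos.2 ht) 3]
  refine (min_le_right _ _).trans ?_
  rw [← mul_div_assoc, div_le_div_iff₀ (log_one_add_sqrt_pos (by positivity))
    (logRatio_pos (hx.le.trans hxt) hx₀ hxt)]
  nlinarith [log_pos hx]

lemma survivalProfile_sq_div_le (hx : 1 < x) (hxt : x ≤ t) (hy : 1 < y) :
    survivalProfile y ((t / x) ^ 2) ≤ 2 * (log y / logRatio t x) := by
  have ht : 0 < t := by linarith
  have hx₀ : 0 < x := zero_lt_one.trans hx
  have h_ratio : 0 < t / x := by positivity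
  have h_log : logRatio t x ≤ 2 * log (1 + t / x) := by
    refine (logRatio_le_log_mul_div ht hx₀).trans
      (log_le_natCast_mul_log (n := 2) (by positivity) ?_)
    nlinarith [sq_nonneg (t / x - 1 / 2)]
  refine (min_le_right _ _).trans ?_
  rw [sqrt_sq h_ratio.le, ← mul_div_assoc, div_le_div_iff₀ (log_pos (by linarith))
    (logRatio_pos (hx.le.trans hxt) hx₀ hxt)]
  nlinarith [log_pos hy]

lemma log_le_two_mul_logRatio (hxt : x ≤ t) (hx : 1 < x) (hy : 0 < y) (hyt : y ^ 2 ≤ t) :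
    log x ≤ 2 * logRatio t y := by
  have ht : 0 < t := by linarith
  have hy_sqrt : y ≤ √t := le_sqrt_of_sq_le hyt
  have h_ratio : √t ≤ 3 * t / (y + √t) := by
    rw [le_div_iff₀ (by positivity)]
    nlinarith [mul_self_sqrt ht.le, sqrt_nonneg t]
  refine log_le_natCast_mul_log (n := 2) (by linarith) (hxt.trans ?_)
  simpa only [sq_sqrt ht.le] using pow_le_pow_left₀ (sqrt_nonneg t) h_ratio 2

lemma log_one_add_sqrt_le_mul_logRatio (hx : 1 < x) (hxt : x ≤ t) (hx_sqrt : x ≤ 4 * √t) :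
    log (1 + √t) ≤ 8 * logRatio t x := by
  have ht : 1 < t := hx.trans_le hxt
  have h_sq : √t ^ 2 = t := sq_sqrt (by linarith)
  have h_sqrt : 1 < √t := lt_sqrt_of_sq_lt (by simpa)
  have h_three_half : 3 / 2 ≤ 3 * t / (x + √t) := by
    rw [div_le_div_iff₀ two_pos (by positivity)]
    nlinarith
  have h_three_fifth : 3 / 5 * √t ≤ 3 * t / (x + √t) := by
    rw [le_div_iff₀ (by positivity)]
    nlinarith
  refine log_le_natCast_mul_log (n := 8) (by positivity) ?_
  calc 1 + √t ≤ (3 / 2) ^ 6 * (3 / 5 * √t) ^ 2 := by nlinarith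
    _ ≤ (3 * t / (x + √t)) ^ 6 * (3 * t / (x + √t)) ^ 2 := by gcongr
    _ = (3 * t / (x + √t)) ^ 8 := by rw [← pow_add]

lemma log_div_logRatio_le_survivalProfile (hx : 1 < x) (hxt : x ≤ t) (hx_sqrt : x ≤ 4 * √t) :
    log x / logRatio t x ≤ 16 * survivalProfile x t := by
  have ht : 1 < t := hx.trans_le hxt
  have h_sqrt : 1 < √t := lt_sqrt_of_sq_lt (by simpa)
  have h_sqrt_log := log_one_add_sqrt_pos (zero_lt_one.trans ht)
  have h_ratio := log_one_add_sqrt_le_mul_logRatio hx hxt hx_sqrt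
  have h_ratio_pos := logRatio_pos ht.le (zero_lt_one.trans hx) hxt
  have h_log : log x ≤ 2 * log (1 + √t) :=
    log_le_natCast_mul_log (n := 2) (by linarith) (by nlinarith)
  unfold survivalProfile
  rw [mul_min_of_nonneg _ _ (by norm_num), mul_one]
  refine le_min ((div_le_iff₀ h_ratio_pos).2 (by linarith)) ?_
  rw [← mul_div_assoc, div_le_div_iff₀ h_ratio_pos h_sqrt_log]
  nlinarith [log_pos hx]

lemma log_div_logRatio_le_survivalProfile_sq (hx : 1 < x) (hx_sqrt : 4 * √t ≤ x) (hy : 1 < y)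
    (hxy : x * y ≤ t) :
    log y / logRatio t x ≤ 2 * survivalProfile y ((2 * t / (x - 1)) ^ 2) := by
  have hxt : x ≤ t := by nlinarith
  have ht : 1 < t := hx.trans_le hxt
  have hx_sub : 0 < x - 1 := sub_pos.2 hx
  have h_sqrt : 1 < √t := lt_sqrt_of_sq_lt (by simpa)
  have h_log_y := log_pos hy
  have h_ratio_pos := logRatio_pos ht.le (zero_lt_one.trans hx) hxt
  have hyσ : y ≤ 2 * t / (x - 1) := (le_div_iff₀ hx_sub).2 (by nlinarith)
  have h_log : log (1 + 2 * t / (x - 1)) ≤ 2 * logRatio t x := by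
    have h_one : 1 ≤ t / x := (one_le_div (by linarith)).2 hxt
    have hσ : 2 * t / (x - 1) ≤ 8 / 3 * (t / x) := by
      rw [← mul_div_assoc, div_le_div_iff₀ hx_sub (by linarith)]
      nlinarith
    have h_ratio : 12 / 5 * (t / x) ≤ 3 * t / (x + √t) := by
      rw [← mul_div_assoc, div_le_div_iff₀ (by linarith) (by linarith)]
      nlinarith
    exact log_le_natCast_mul_log (n := 2) (by linarith) (by nlinarith)
  unfold survivalProfile
  rw [sqrt_sq (by linarith), mul_min_of_nonneg _ _ two_pos.le, mul_one]
  refine le_min ((div_le_iff₀ h_ratio_pos).2 ?_) ?_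
  · exact (log_le_log (by linarith) (by linarith)).trans h_log
  · rw [← mul_div_assoc, div_le_div_iff₀ h_ratio_pos (log_pos (by linarith))]
    nlinarith

end LogRatio

/-! ### Upper bounds -/

lemma sq_sub_one_le_mul_log_div {y ρ : ℝ} (hy : 1 < y) (hyρ : y ≤ ρ) :
    y ^ 2 - 1 ≤ 3 * ρ ^ 2 * (log y / log (1 + ρ)) := by
  have hy₀ : 0 < y := zero_lt_one.trans hy
  have hρ₀ : 0 < ρ := hy₀.trans_le hyρ
  have h_log : 0 < log (1 + ρ) := log_pos (lt_add_of_pos_right 1 hρ₀)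
  have h_log_le : log (1 + ρ) ≤ log y + ρ / y := by
    have h := log_le_sub_one_of_pos (show 0 < (1 + ρ) / y by positivity)
    rw [log_div (by positivity) hy₀.ne', add_div] at h
    linarith [(div_le_one hy₀).2 hy.le]
  have h_sq : y ^ 2 - 1 ≤ 2 * y ^ 2 * log y := by
    have h := mul_le_mul_of_nonneg_left
      (one_sub_inv_le_log_of_pos (show 0 < y ^ 2 by positivity)) (sq_nonneg y)
    rw [mul_sub, mul_inv_cancel₀ (by positivity), log_pow] at h
    push_cast at h
    linarith
  rw [← mul_div_assoc, le_div_iff₀ h_log]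
  calc (y ^ 2 - 1) * log (1 + ρ) ≤ (y ^ 2 - 1) * (log y + ρ / y) :=
        mul_le_mul_of_nonneg_left h_log_le (by nlinarith)
    _ ≤ y ^ 2 * log y + 2 * y ^ 2 * log y * (ρ / y) := by
        have := log_pos hy
        rw [mul_add]
        gcongr
        linarith
    _ = (y ^ 2 + 2 * (y * ρ)) * log y := by field_simp
    _ ≤ 3 * ρ ^ 2 * log y := mul_le_mul_of_nonneg_right (by nlinarith) (log_pos hy).le

lemma sq_sub_one_le_mul_survivalProfile {r y : ℝ} (hy : 1 < y) (hyr : y ^ 2 ≤ 4 * r) :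
    y ^ 2 - 1 ≤ 12 * r * survivalProfile y r := by
  have hr : 0 < r := by nlinarith
  have hyρ : y ≤ 2 * √r := by
    refine le_of_sq_le_sq ?_ (by positivity)
    rwa [mul_pow, sq_sqrt hr.le, show (2 : ℝ) ^ 2 = 4 by norm_num]
  have h_log := log_one_add_sqrt_pos hr
  have := log_pos hy
  unfold survivalProfile
  rw [mul_min_of_nonneg _ _ (by positivity)]
  refine le_min (by linarith) ((sq_sub_one_le_mul_log_div hy hyρ).trans ?_)
  rw [mul_pow, sq_sqrt hr.le, ← mul_assoc, show (3 : ℝ) * 2 ^ 2 = 12 by norm_num]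
  gcongr
  linarith [sqrt_nonneg r]

namespace KilledBesselKernel

variable {p₁ : ℝ → ℝ → ℝ → ℝ} {q : ℝ → ℝ → ℝ} {a A b r s t x y : ℝ}

lemma setIntegral_mul_le (H : KilledBesselKernel p₁ q a A) (hr : 0 < r) (hx : 1 < x) :
    ∫ u in Set.Ioo 0 r, q x u * u ≤ 2 * A * r * survivalProfile x r := by
  have h_int : IntegrableOn (fun u => q x u * min u r) (Set.Ioi 0) := by
    refine (H.integrableOn_q hx).mul_bdd (c := r)
      (continuous_id.min continuous_const).aestronglyMeasurable ?_
    filter_upwards [ae_restrict_mem measurableSet_Ioi] with u hu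
    rw [norm_of_nonneg (le_min (le_of_lt hu) hr.le)]
    exact min_le_right _ _
  refine le_trans ?_ (H.integral_mul_min_le hr hx)
  rw [setIntegral_congr_fun measurableSet_Ioo (g := fun u => q x u * min u r)
    fun u hu => by simp only [min_eq_left hu.2.le]]
  refine setIntegral_mono_set h_int ?_ Set.Ioo_subset_Ioi_self.eventuallyLE
  filter_upwards [ae_restrict_mem measurableSet_Ioi] with u hu
  exact mul_nonneg (H.q_nonneg hx hu) (le_min (le_of_lt hu) hr.le)

lemma le_setIntegral_hunt (H : KilledBesselKernel p₁ q a A) (hr : 0 < r) (hrt : r ≤ t / 2)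
    (hx : 1 < x) (hy : 1 < y) :
    pk t 1 y * ((∫ u in Set.Ioo 0 r, q x u) -
      (1 + y ^ 2) / t ^ 2 * ∫ u in Set.Ioo 0 r, q x u * u) ≤
      ∫ u in Set.Ioo 0 t, q x u * pk (t - u) 1 y := by
  have ht : 0 < t := by linarith
  have h_sub : Set.Ioo 0 r ⊆ Set.Ioo 0 t := Set.Ioo_subset_Ioo_right (by linarith)
  have h_q : IntegrableOn (q x) (Set.Ioo 0 r) :=
    (H.integrableOn_q hx).mono_set Set.Ioo_subset_Ioi_self
  have h_qu : IntegrableOn (fun u => q x u * u) (Set.Ioo 0 r) := by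
    refine h_q.mul_bdd (c := r) measurable_id.aestronglyMeasurable ?_
    filter_upwards [ae_restrict_mem measurableSet_Ioo] with u hu
    rw [norm_of_nonneg hu.1.le]
    exact hu.2.le
  calc pk t 1 y * ((∫ u in Set.Ioo 0 r, q x u) -
        (1 + y ^ 2) / t ^ 2 * ∫ u in Set.Ioo 0 r, q x u * u)
      = ∫ u in Set.Ioo 0 r, pk t 1 y * (q x u - (1 + y ^ 2) / t ^ 2 * (q x u * u)) := by
        rw [integral_const_mul, integral_sub h_q (h_qu.const_mul _), integral_const_mul]
    _ ≤ ∫ u in Set.Ioo 0 r, q x u * pk (t - u) 1 y := by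
        refine setIntegral_mono_on ((h_q.sub (h_qu.const_mul _)).const_mul _)
          ((H.integrableOn_hunt hx hy).mono_set h_sub) measurableSet_Ioo fun u hu => ?_
        have h_pk := mul_le_mul_of_nonneg_left (pk_mul_one_sub_le_pk_sub (x := 1) (y := y) hu.1.le
          (hu.2.le.trans hrt) ht (by linarith)) (H.q_nonneg hx hu.1)
        linarith
    _ ≤ ∫ u in Set.Ioo 0 t, q x u * pk (t - u) 1 y :=
        setIntegral_mono_set (H.integrableOn_hunt hx hy)
          ((ae_restrict_mem measurableSet_Ioo).mono fun u hu =>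
            mul_nonneg (H.q_nonneg hx hu.1) (pk_nonneg (sub_pos.2 hu.2).le)) h_sub.eventuallyLE

lemma le_pk_sub_pk_add (H : KilledBesselKernel p₁ q a A) (hr : 0 < r) (hrt : r ≤ t / 2)
    (hx : 1 < x) (hy : 1 < y) :
    p₁ t x y ≤ pk t x y - pk t 1 y +
      pk t 1 y * (A * survivalProfile x r * (1 + 2 * (1 + y ^ 2) * r / t ^ 2)) := by
  have ht : 0 < t := by linarith
  have h_mass := H.setIntegral_Ioo_add_tail hr.le hx
  rw [H.integral_q hx] at h_mass
  have h_moment := mul_le_mul_of_nonneg_left (H.setIntegral_mul_le hr hx)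
    (show 0 ≤ (1 + y ^ 2) / t ^ 2 by positivity)
  have h_pk := mul_le_mul_of_nonneg_left (a := pk t 1 y)
    (show 1 - A * survivalProfile x r * (1 + 2 * (1 + y ^ 2) * r / t ^ 2) ≤
      (∫ u in Set.Ioo 0 r, q x u) - (1 + y ^ 2) / t ^ 2 * ∫ u in Set.Ioo 0 r, q x u * u by
        linarith [H.tail_le hr hx, show A * survivalProfile x r *
          (1 + 2 * (1 + y ^ 2) * r / t ^ 2) = A * survivalProfile x r +
          (1 + y ^ 2) / t ^ 2 * (2 * A * r * survivalProfile x r) by ring])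
    (pk_nonneg ht.le)
  linarith [H.hunt ht hx hy, H.le_setIntegral_hunt hr hrt hx hy]

lemma le_exp_mul_survivalProfile (H : KilledBesselKernel p₁ q a A) (hrt : r ≤ t / 2)
    (hx : 1 < x) (hxr : x ^ 2 ≤ 4 * r) (hy : 1 < y) :
    p₁ t x y ≤ t⁻¹ * exp (-y ^ 2 / (2 * t) + x * y / t) * survivalProfile x r *
      (A + (3 + 2 * A) * (1 + y ^ 2) * r / t ^ 2) := by
  have hr : 0 < r := by nlinarith
  have ht : 0 < t := by linarith
  have hA := H.A_pos
  have h_profile := survivalProfile_pos hr hx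
  have h_sub : pk t x y - pk t 1 y ≤ t⁻¹ * exp (-y ^ 2 / (2 * t) + x * y / t) *
      (survivalProfile x r * (3 * (1 + y ^ 2) * r / t ^ 2)) := by
    refine (pk_sub_pk_le ht zero_le_one hx.le (by linarith)).trans
      (mul_le_mul_of_nonneg_left ?_ (by positivity))
    rw [← mul_div_assoc, div_le_div_iff₀ (by positivity) (by positivity), one_pow]
    have h_sq := mul_le_mul_of_nonneg_right
      (sq_sub_one_le_mul_survivalProfile hx hxr) (sq_nonneg y)
    have : 0 ≤ 12 * r * survivalProfile x r := by positivity
    nlinarith [sq_nonneg t]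
  have h_pk : pk t 1 y ≤ t⁻¹ * exp (-y ^ 2 / (2 * t) + x * y / t) := by
    refine (pk_le_inv_mul_exp ht (by linarith)).trans (mul_le_mul_of_nonneg_left
      (exp_le_exp.2 ?_) (by positivity))
    rw [show -y ^ 2 / (2 * t) + x * y / t = (-y ^ 2 + 2 * x * y) / (2 * t) by field_simp]
    gcongr
    nlinarith
  refine (H.le_pk_sub_pk_add hr hrt hx hy).trans ((add_le_add h_sub
    (mul_le_mul_of_nonneg_right h_pk (by positivity))).trans_eq ?_)
  ring

lemma le_survivalProfile_half (H : KilledBesselKernel p₁ q a A) (ht : 1 / 2 ≤ t) (hx : 1 < x)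
    (hxt : x ^ 2 ≤ 2 * t) (hy : 1 < y) :
    p₁ t x y ≤ 6 * exp 2 * (1 + A) * t⁻¹ * survivalProfile x (t / 2) := by
  have ht₀ : 0 < t := by linarith
  have hA := H.A_pos
  have h_profile := survivalProfile_pos (half_pos ht₀) hx
  have h_exponent : -y ^ 2 / (2 * t) + x * y / t ≤ 2 + -(y ^ 2 / (4 * t)) := by
    rw [show -y ^ 2 / (2 * t) + x * y / t = (-2 * y ^ 2 + 4 * x * y) / (4 * t) by field_simp; ring,
      show 2 + -(y ^ 2 / (4 * t)) = (8 * t - y ^ 2) / (4 * t) by field_simp; ring]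
    gcongr
    nlinarith [sq_nonneg (2 * x - y)]
  have h_bracket : A + (3 + 2 * A) * (1 + y ^ 2) * (t / 2) / t ^ 2 ≤
      3 * (1 + A) * (1 + 2 * (y ^ 2 / (4 * t))) := by
    have h_inv : t⁻¹ / 2 ≤ 1 := by
      rw [inv_eq_one_div, div_div, div_le_one (by positivity)]
      linarith
    rw [show (3 + 2 * A) * (1 + y ^ 2) * (t / 2) / t ^ 2 =
      (3 + 2 * A) * (t⁻¹ / 2 + 2 * (y ^ 2 / (4 * t))) by field_simp; ring]
    have : 0 ≤ y ^ 2 / (4 * t) := by positivity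
    nlinarith
  have h_exp : (1 + 2 * (y ^ 2 / (4 * t))) * exp (-(y ^ 2 / (4 * t))) ≤ 2 := by
    rw [exp_neg, ← div_eq_mul_inv, div_le_iff₀ (exp_pos _)]
    linarith [add_one_le_exp (y ^ 2 / (4 * t))]
  calc p₁ t x y
      ≤ t⁻¹ * exp (-y ^ 2 / (2 * t) + x * y / t) * survivalProfile x (t / 2) *
        (A + (3 + 2 * A) * (1 + y ^ 2) * (t / 2) / t ^ 2) :=
        H.le_exp_mul_survivalProfile le_rfl hx (by linarith) hy
    _ ≤ t⁻¹ * exp (2 + -(y ^ 2 / (4 * t))) * survivalProfile x (t / 2) *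
        (3 * (1 + A) * (1 + 2 * (y ^ 2 / (4 * t)))) := by gcongr
    _ = 3 * exp 2 * (1 + A) * t⁻¹ * survivalProfile x (t / 2) *
        ((1 + 2 * (y ^ 2 / (4 * t))) * exp (-(y ^ 2 / (4 * t)))) := by
        rw [exp_add]
        ring
    _ ≤ 3 * exp 2 * (1 + A) * t⁻¹ * survivalProfile x (t / 2) * 2 := by gcongr
    _ = 6 * exp 2 * (1 + A) * t⁻¹ * survivalProfile x (t / 2) := by ring

lemma add_le_mul_integral_tail (H : KilledBesselKernel p₁ q a A) (ht : 0 < t) (hs : 0 < s)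
    (hx : 1 < x) (hy : 1 < y) (h_le : ∀ w, 1 < w → p₁ s w y ≤ b) :
    p₁ (t + s) x y ≤ b * ∫ u in Set.Ioi t, q x u := by
  rw [H.ck ht hs hx hy, ← H.mass ht hx, ← integral_const_mul]
  refine integral_mono_of_nonneg ?_ ((H.integrableOn_mul ht hx).const_mul b) ?_ <;>
    filter_upwards [ae_restrict_mem measurableSet_Ioi] with w (hw : 1 < w)
  · have := H.pos ht hx hw
    have := H.pos hs hw hy
    have := zero_lt_one.trans hw
    dsimp only [Pi.zero_apply]
    positivity
  · have h_mul := mul_le_mul_of_nonneg_left (h_le w hw)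
      (mul_pos (H.pos ht hx hw) (zero_lt_one.trans hw)).le
    linarith

lemma le_survivalProfile_mul (H : KilledBesselKernel p₁ q a A) (hx : 1 < x) (hy : 1 < y)
    (hyt : y ^ 2 ≤ t) :
    p₁ t x y ≤ 12 * exp 2 * (1 + A) * A * t⁻¹ *
      (survivalProfile x (t / 4) * survivalProfile y (t / 4)) := by
  have ht : 1 < t := by nlinarith
  have ht₂ : 0 < t / 2 := by linarith
  have hA := H.A_pos
  have h_sup (w : ℝ) (hw : 1 < w) :
      p₁ (t / 2) w y ≤ 12 * exp 2 * (1 + A) * t⁻¹ * survivalProfile y (t / 4) := by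
    rw [H.symm ht₂ hw hy]
    refine (H.le_survivalProfile_half (by linarith) hy (by linarith) hw).trans_eq ?_
    rw [inv_div, show t / 2 / 2 = t / 4 by ring]
    ring
  have h_tail : ∫ u in Set.Ioi (t / 2), q x u ≤ A * survivalProfile x (t / 4) :=
    (H.tail_le ht₂ hx).trans (mul_le_mul_of_nonneg_left
      (survivalProfile_anti (by linarith) (by linarith) hx) hA.le)
  have h_profile := survivalProfile_pos (show 0 < t / 4 by linarith) hy
  calc p₁ t x y = p₁ (t / 2 + t / 2) x y := by rw [add_halves]
    _ ≤ 12 * exp 2 * (1 + A) * t⁻¹ * survivalProfile y (t / 4) * ∫ u in Set.Ioi (t / 2), q x u :=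
        H.add_le_mul_integral_tail ht₂ ht₂ hx hy h_sup
    _ ≤ 12 * exp 2 * (1 + A) * t⁻¹ * survivalProfile y (t / 4) * (A * survivalProfile x (t / 4)) :=
        by gcongr
    _ = 12 * exp 2 * (1 + A) * A * t⁻¹ * (survivalProfile x (t / 4) * survivalProfile y (t / 4)) :=
        by ring

lemma le_smallProfile_of_le_sqrt (H : KilledBesselKernel p₁ q a A) (hx : 1 < x) (hxt : x ≤ t)
    (hx_sqrt : x ≤ 4 * √t) (hy : 1 < y) (hyt : y ^ 2 ≤ t) :
    p₁ t x y ≤ 108 * exp 11 * (1 + A) * A * smallProfile t x y := by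
  have ht : 1 < t := hx.trans_le hxt
  have hA := H.A_pos
  have hx_profile := survivalProfile_div_four_le hx hxt
  have hy_profile := survivalProfile_div_four_le hy (t := t) (by nlinarith)
  have hy_nonneg := (survivalProfile_pos (show 0 < t / 4 by linarith) hy).le
  have hx_nonneg := (survivalProfile_pos (show 0 < t / 4 by linarith) hx).le.trans hx_profile
  have h_exp : 1 ≤ exp (9 + -(x ^ 2 + y ^ 2) / (2 * t)) := by
    have hx_sq := pow_le_pow_left₀ (by linarith) hx_sqrt 2
    rw [mul_pow, sq_sqrt (by linarith)] at hx_sq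
    refine one_le_exp ?_
    rw [neg_div, ← sub_eq_add_neg, sub_nonneg, div_le_iff₀ (by linarith)]
    linarith
  calc p₁ t x y ≤ 12 * exp 2 * (1 + A) * A * t⁻¹ *
        (survivalProfile x (t / 4) * survivalProfile y (t / 4)) :=
        H.le_survivalProfile_mul hx hy hyt
    _ ≤ 12 * exp 2 * (1 + A) * A * t⁻¹ *
        (3 * (log x / logRatio t x) * (3 * (log y / logRatio t y))) := by gcongr
    _ ≤ 12 * exp 2 * (1 + A) * A * t⁻¹ *
        (3 * (log x / logRatio t x) * (3 * (log y / logRatio t y))) *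
        exp (9 + -(x ^ 2 + y ^ 2) / (2 * t)) :=
        le_mul_of_one_le_right (mul_nonneg (by positivity)
          (mul_nonneg hx_nonneg (hy_nonneg.trans hy_profile))) h_exp
    _ = 108 * exp 11 * (1 + A) * A * smallProfile t x y := by
        rw [show (11 : ℝ) = 2 + 9 by norm_num, exp_add 2 9, exp_add 9, smallProfile]
        ring

lemma le_survivalProfile_sq_div (H : KilledBesselKernel p₁ q a A) (hx : 1 < x)
    (hx_sqrt : 4 * √t ≤ x) (hy : 1 < y) (hxy : x * y ≤ t) :
    p₁ t x y ≤ exp 2 * (6 + 5 * A) * (t⁻¹ * exp (-(x ^ 2 + y ^ 2) / (2 * t))) *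
      survivalProfile y ((t / x) ^ 2) := by
  have hx₀ : 0 < x := zero_lt_one.trans hx
  have ht : 0 < t := by nlinarith
  have hA := H.A_pos
  have hx_sq := pow_le_pow_left₀ (by positivity) hx_sqrt 2
  rw [mul_pow, sq_sqrt ht.le] at hx_sq
  have hyr := pow_le_pow_left₀ (by linarith) ((le_div_iff₀' hx₀).2 hxy) 2
  have h_half : (t / x) ^ 2 ≤ t / 2 := by
    rw [div_pow, div_le_iff₀ (by positivity)]
    nlinarith
  have h_exponent : -x ^ 2 / (2 * t) + y * x / t ≤ 2 + -(x ^ 2 + y ^ 2) / (2 * t) := by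
    rw [← sub_nonneg, show 2 + -(x ^ 2 + y ^ 2) / (2 * t) - (-x ^ 2 / (2 * t) + y * x / t) =
      (4 * t - y ^ 2 - 2 * (x * y)) / (2 * t) by field_simp; ring]
    exact div_nonneg (by linarith) (by linarith)
  have h_bracket : A + (3 + 2 * A) * (1 + x ^ 2) * (t / x) ^ 2 / t ^ 2 ≤ 6 + 5 * A := by
    rw [show (3 + 2 * A) * (1 + x ^ 2) * (t / x) ^ 2 / t ^ 2 = (3 + 2 * A) * (1 + (x ^ 2)⁻¹) by
      field_simp; ring]
    nlinarith [inv_le_one_of_one_le₀ (one_le_pow₀ hx.le : 1 ≤ x ^ 2)]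
  have h_profile := survivalProfile_pos (t := (t / x) ^ 2) (by positivity) hy
  calc p₁ t x y = p₁ t y x := H.symm ht hx hy
    _ ≤ t⁻¹ * exp (-x ^ 2 / (2 * t) + y * x / t) * survivalProfile y ((t / x) ^ 2) *
        (A + (3 + 2 * A) * (1 + x ^ 2) * (t / x) ^ 2 / t ^ 2) :=
        H.le_exp_mul_survivalProfile h_half hy (by linarith [sq_nonneg (t / x)]) hx
    _ ≤ t⁻¹ * exp (2 + -(x ^ 2 + y ^ 2) / (2 * t)) * survivalProfile y ((t / x) ^ 2) *
        (6 + 5 * A) := by gcongr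
    _ = exp 2 * (6 + 5 * A) * (t⁻¹ * exp (-(x ^ 2 + y ^ 2) / (2 * t))) *
        survivalProfile y ((t / x) ^ 2) := by
        rw [exp_add]
        ring

lemma le_smallProfile_of_sqrt_le (H : KilledBesselKernel p₁ q a A) (hx : 1 < x)
    (hx_sqrt : 4 * √t ≤ x) (hy : 1 < y) (hxy : x * y ≤ t) :
    p₁ t x y ≤ exp 2 * (12 + 10 * A) * smallProfile t x y := by
  have hxt : x ≤ t := by nlinarith
  have hyt : y ≤ t := by nlinarith
  have ht : 1 < t := hx.trans_le hxt
  have hA := H.A_pos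
  have h_log : 1 ≤ log x / logRatio t y := (one_le_div (logRatio_pos ht.le (by linarith) hyt)).2
    ((logRatio_le_log_mul_sqrt (by linarith) (by linarith)).trans
      (log_le_log (by positivity) (by linarith [sqrt_nonneg t])))
  have h_ratio : 0 ≤ log y / logRatio t x :=
    (div_pos (log_pos hy) (logRatio_pos ht.le (by linarith) hxt)).le
  calc p₁ t x y ≤ exp 2 * (6 + 5 * A) * (t⁻¹ * exp (-(x ^ 2 + y ^ 2) / (2 * t))) *
        survivalProfile y ((t / x) ^ 2) := H.le_survivalProfile_sq_div hx hx_sqrt hy hxy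
    _ ≤ exp 2 * (6 + 5 * A) * (t⁻¹ * exp (-(x ^ 2 + y ^ 2) / (2 * t))) *
        (2 * (log y / logRatio t x)) := by
        gcongr
        exact survivalProfile_sq_div_le hx hxt hy
    _ ≤ exp 2 * (6 + 5 * A) * (t⁻¹ * exp (-(x ^ 2 + y ^ 2) / (2 * t))) *
        (2 * (log y / logRatio t x)) * (log x / logRatio t y) :=
        le_mul_of_one_le_right (by positivity) h_log
    _ = exp 2 * (12 + 10 * A) * smallProfile t x y := by
        rw [smallProfile]
        ring

end KilledBesselKernel

/-! ### Lower bounds -/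

lemma setIntegral_mul_le_sub_half_tail {f g : ℝ → ℝ} {M s t : ℝ} (hs : 0 ≤ s) (hM : 0 ≤ M)
    (hf : IntegrableOn f (Set.Ioi 0)) (hf_nonneg : ∀ u ∈ Set.Ioi 0, 0 ≤ f u)
    (hfg : IntegrableOn (fun u => f u * g u) (Set.Ioo 0 t)) (h_le : ∀ u ∈ Set.Ioo 0 t, g u ≤ M)
    (h_half : ∀ u ∈ Set.Ioo 0 t, s < u → g u ≤ M / 2) :
    ∫ u in Set.Ioo 0 t, f u * g u ≤
      M * (∫ u in Set.Ioi 0, f u) - M / 2 * ∫ u in Set.Ioi s, f u := by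
  set F : ℝ → ℝ := fun u => M * f u - M / 2 * (Set.Ioi s).indicator f u
  have h_ind := (hf.indicator measurableSet_Ioi (t := Set.Ioi s)).const_mul (M / 2)
  have hF : IntegrableOn F (Set.Ioi 0) := (hf.const_mul M).sub h_ind
  have hF_nonneg : ∀ u ∈ Set.Ioi 0, 0 ≤ F u := fun u hu => by
    have h_indicator : (Set.Ioi s).indicator f u ≤ f u :=
      Set.indicator_apply_le' (fun _ => le_rfl) fun _ => hf_nonneg u hu
    change 0 ≤ M * f u - M / 2 * (Set.Ioi s).indicator f u
    linarith [mul_nonneg hM (hf_nonneg u hu),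
      mul_le_mul_of_nonneg_left h_indicator (div_nonneg hM two_pos.le)]
  have hF_ge : ∀ u ∈ Set.Ioo 0 t, f u * g u ≤ F u := fun u hu => by
    have hfu := hf_nonneg u hu.1
    by_cases hsu : s < u
    · simp only [F, Set.indicator_of_mem (Set.mem_Ioi.2 hsu)]
      linarith [mul_le_mul_of_nonneg_left (h_half u hu hsu) hfu]
    · simp only [F, Set.indicator_of_notMem (mt Set.mem_Ioi.1 hsu)]
      linarith [mul_le_mul_of_nonneg_left (h_le u hu) hfu]
  calc ∫ u in Set.Ioo 0 t, f u * g u ≤ ∫ u in Set.Ioo 0 t, F u :=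
        setIntegral_mono_on hfg (hF.mono_set Set.Ioo_subset_Ioi_self) measurableSet_Ioo hF_ge
    _ ≤ ∫ u in Set.Ioi 0, F u := setIntegral_mono_set hF
        ((ae_restrict_mem measurableSet_Ioi).mono hF_nonneg) Set.Ioo_subset_Ioi_self.eventuallyLE
    _ = M * (∫ u in Set.Ioi 0, f u) - M / 2 * ∫ u in Set.Ioi s, f u := by
        rw [integral_sub (hf.const_mul M) h_ind, integral_const_mul, integral_const_mul,
          setIntegral_indicator_Ioi hs]

lemma log_three_half_sq_mul_smallProfile_le {t x y : ℝ} (hx : 1 < x) (hy : 1 < y)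
    (hxt : x ≤ t) (hyt : y ≤ t) :
    log (3 / 2) ^ 2 * smallProfile t x y ≤ (x - 1) * (y - 1) := by
  have ht : 1 < t := hx.trans_le hxt
  have h_base : 0 < log (3 / 2) := log_pos (by norm_num)
  have hx_ratio := log_three_half_le_logRatio ht.le (zero_lt_one.trans hx) hxt
  have hy_ratio := log_three_half_le_logRatio ht.le (zero_lt_one.trans hy) hyt
  have hy_log := log_pos hy
  have h_exp : exp (-(x ^ 2 + y ^ 2) / (2 * t)) ≤ 1 :=
    exp_le_one_iff.2 (div_nonpos_of_nonpos_of_nonneg (by nlinarith) (by linarith))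
  calc log (3 / 2) ^ 2 * smallProfile t x y
      = log x * (log (3 / 2) / logRatio t x) * (log y * (log (3 / 2) / logRatio t y)) * t⁻¹ *
        exp (-(x ^ 2 + y ^ 2) / (2 * t)) := by
        rw [smallProfile]
        ring
    _ ≤ (x - 1) * 1 * ((y - 1) * 1) * 1 * 1 := by
        have : 0 < logRatio t x := h_base.trans_le hx_ratio
        have : 0 < logRatio t y := h_base.trans_le hy_ratio
        have := div_le_one_of_le₀ hx_ratio (by positivity)
        have := div_le_one_of_le₀ hy_ratio (by positivity)
        have := log_le_sub_one_of_pos (zero_lt_one.trans hx)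
        have := log_le_sub_one_of_pos (zero_lt_one.trans hy)
        have := inv_le_one_of_one_le₀ ht.le
        gcongr
    _ = (x - 1) * (y - 1) := by ring

lemma div_one_add_le_one_sub_exp_neg {z : ℝ} (hz : 0 ≤ z) : z / (1 + z) ≤ 1 - exp (-z) := by
  have h_inv : exp (-z) ≤ (1 + z)⁻¹ := by
    rw [exp_neg]
    exact inv_anti₀ (by linarith) (by linarith [add_one_le_exp z])
  rw [show z / (1 + z) = 1 - (1 + z)⁻¹ by field_simp; ring]
  linarith

lemma exists_mul_le_sqrt_mul_hker {T : ℝ} (hT : 0 < T) :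
    ∃ g : ℝ, 0 < g ∧ ∀ t x y : ℝ, t ≤ T → 1 < x → 1 < y → x * y ≤ t →
      g * ((x - 1) * (y - 1)) ≤ √(x * y) * hker t x y := by
  refine ⟨(2 * π * T) ^ (-(1 : ℝ) / 2) * T⁻¹ * exp (-T) * (2 / T / (1 + 2 * T)), by positivity,
    fun t x y htT hx hy hxy => ?_⟩
  have : 0 < x - 1 := sub_pos.2 hx
  have : 0 < y - 1 := sub_pos.2 hy
  have ht_one : 1 < t := by nlinarith
  have ht : 0 < t := zero_lt_one.trans ht_one
  set z := 2 * (x - 1) * (y - 1) / t with hz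
  have hz_le : z ≤ 2 * T := by
    rw [hz, div_le_iff₀ ht]
    nlinarith
  have h_split : exp (-(x + y - 2) ^ 2 / (2 * t)) = exp (-(x - y) ^ 2 / (2 * t)) * exp (-z) := by
    rw [← exp_add]
    congr 1
    rw [hz]
    field_simp
    ring
  have h_reflect : 2 / T / (1 + 2 * T) * ((x - 1) * (y - 1)) ≤ 1 - exp (-z) :=
    calc 2 / T / (1 + 2 * T) * ((x - 1) * (y - 1)) = 2 * (x - 1) * (y - 1) / T / (1 + 2 * T) := by
          ring
      _ ≤ z / (1 + z) := by rw [hz]; gcongr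
      _ ≤ 1 - exp (-z) := div_one_add_le_one_sub_exp_neg (by positivity)
  have h_gauss : exp (-T) ≤ exp (-(x - y) ^ 2 / (2 * t)) := by
    refine exp_le_exp.2 ((le_div_iff₀ (by positivity)).2 ?_)
    have : (x - y) ^ 2 ≤ t ^ 2 := sq_le_sq' (by nlinarith) (by nlinarith)
    nlinarith
  have h_sqrt : 1 ≤ √(x * y) := one_le_sqrt.2 (by nlinarith)
  have h_rpow : (2 * π * T) ^ (-(1 : ℝ) / 2) ≤ (2 * π * t) ^ (-(1 : ℝ) / 2) :=
    rpow_le_rpow_of_nonpos (by positivity) (by gcongr) (by norm_num)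
  calc (2 * π * T) ^ (-(1 : ℝ) / 2) * T⁻¹ * exp (-T) * (2 / T / (1 + 2 * T)) * ((x - 1) * (y - 1))
      = 1 * ((2 * π * T) ^ (-(1 : ℝ) / 2) * T⁻¹ *
        (exp (-T) * (2 / T / (1 + 2 * T) * ((x - 1) * (y - 1))))) := by ring
    _ ≤ √(x * y) * ((2 * π * t) ^ (-(1 : ℝ) / 2) * (x * y)⁻¹ *
        (exp (-(x - y) ^ 2 / (2 * t)) * (1 - exp (-z)))) := by
        gcongr
        exact hxy.trans htT
    _ = √(x * y) * hker t x y := by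
        rw [hker, h_split]
        ring

lemma three_mul_exp_le {t x y : ℝ} (ht : 0 < t) (hx : 16 * t ≤ x ^ 2) (hyt : y ^ 2 ≤ t) :
    3 * exp ((y ^ 2 - 1) / (2 * t)) ≤ x ^ 2 / (2 * t) := by
  have h_le : (y ^ 2 - 1) / (2 * t) ≤ log 2 := by
    refine le_trans ?_ (le_of_lt (lt_trans (by norm_num) log_two_gt_d9) : (1 / 2 : ℝ) ≤ log 2)
    rw [div_le_div_iff₀ (by linarith) two_pos]
    linarith
  have h_two := (exp_le_exp.2 h_le).trans_eq (exp_log two_pos)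
  have h_eight : 8 ≤ x ^ 2 / (2 * t) := (le_div_iff₀ (by linarith)).2 (by linarith)
  linarith

namespace KilledBesselKernel

variable {p₁ : ℝ → ℝ → ℝ → ℝ} {q : ℝ → ℝ → ℝ} {a A b c m n s t w x y K : ℝ}

lemma half_mul_pk_mul_tail_le (H : KilledBesselKernel p₁ q a A) (ht : 0 < t) (hx : 1 < x)
    (hy : 1 < y) (h_far : 4 * t ≤ (y - 1) ^ 2) (h_pk : pk t 1 y ≤ pk t x y) :
    pk t 1 y / 2 * ∫ u in Set.Ioi ((2 * t / (y - 1)) ^ 2), q x u ≤ p₁ t x y := by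
  have : 0 < y - 1 := sub_pos.2 hy
  have h_pk_nonneg : 0 ≤ pk t 1 y := pk_nonneg ht.le
  have h_decay : ∀ u ∈ Set.Ioo 0 t, pk (t - u) 1 y ≤
      pk t 1 y * exp (-(u / (2 * t / (y - 1)) ^ 2)) := fun u hu => by
    refine (pk_sub_le_pk_mul_exp hu.1.le hu.2 (by linarith) (by linarith)).trans_eq ?_
    congr 3
    field_simp
    ring
  have h_one : ∀ u ∈ Set.Ioo 0 t, pk (t - u) 1 y ≤ pk t 1 y := fun u hu =>
    (h_decay u hu).trans (mul_le_of_le_one_right h_pk_nonneg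
      (exp_le_one_iff.2 (neg_nonpos.2 (div_nonneg hu.1.le (sq_nonneg _)))))
  have h_half : ∀ u ∈ Set.Ioo 0 t, (2 * t / (y - 1)) ^ 2 < u → pk (t - u) 1 y ≤ pk t 1 y / 2 :=
    fun u hu hsu => by
      have h_ratio : 1 ≤ u / (2 * t / (y - 1)) ^ 2 := (one_le_div (by positivity)).2 hsu.le
      have h_exp : exp (-(u / (2 * t / (y - 1)) ^ 2)) ≤ 2⁻¹ := by
        rw [exp_neg]
        exact inv_anti₀ two_pos (by linarith [add_one_le_exp (u / (2 * t / (y - 1)) ^ 2)])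
      exact (h_decay u hu).trans (mul_le_mul_of_nonneg_left h_exp h_pk_nonneg)
  have h_hunt := setIntegral_mul_le_sub_half_tail (sq_nonneg (2 * t / (y - 1))) h_pk_nonneg
    (H.integrableOn_q hx) (fun u hu => H.q_nonneg hx hu) (H.integrableOn_hunt hx hy) h_one h_half
  rw [H.integral_q hx] at h_hunt
  rw [H.hunt ht hx hy]
  linarith

lemma mul_survivalProfile_le (H : KilledBesselKernel p₁ q a A) (hx : 1 < x) (hy : 1 < y)
    (hyt : y ≤ t) (h_far : 4 * t ≤ (y - 1) ^ 2)
    (h_exp : 3 * exp ((x ^ 2 - 1) / (2 * t)) ≤ y ^ 2 / (2 * t)) :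
    a / 2 * (t⁻¹ * exp (-(1 + y ^ 2) / (2 * t))) * survivalProfile x ((2 * t / (y - 1)) ^ 2) ≤
      p₁ t x y := by
  have ht : 0 < t := by linarith
  have hs : 0 < (2 * t / (y - 1)) ^ 2 := pow_pos (div_pos (by linarith) (by linarith)) 2
  have h_pk : pk t 1 y ≤ pk t x y := pk_le_pk_of_exp_le ht zero_le_one hx.le (by linarith)
    (by linarith) (by simpa only [one_pow] using h_exp)
  have h_one : t⁻¹ * exp (-(1 + y ^ 2) / (2 * t)) ≤ pk t 1 y := by
    simpa only [one_pow] using inv_mul_exp_le_pk (x := 1) (y := y) ht.le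
  have h_profile := mul_pos H.a_pos (survivalProfile_pos hs hx)
  calc a / 2 * (t⁻¹ * exp (-(1 + y ^ 2) / (2 * t))) * survivalProfile x ((2 * t / (y - 1)) ^ 2)
      = t⁻¹ * exp (-(1 + y ^ 2) / (2 * t)) / 2 *
        (a * survivalProfile x ((2 * t / (y - 1)) ^ 2)) := by ring
    _ ≤ pk t 1 y / 2 * ∫ u in Set.Ioi ((2 * t / (y - 1)) ^ 2), q x u := by
        have := pk_nonneg (x := 1) (y := y) ht.le
        gcongr
        exact H.le_tail hs hx
    _ ≤ p₁ t x y := H.half_mul_pk_mul_tail_le ht hx hy h_far h_pk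

lemma mul_smallProfile_le_of_sqrt_le (H : KilledBesselKernel p₁ q a A) (hx : 1 < x)
    (hx_sqrt : 4 * √t ≤ x) (hy : 1 < y) (hyt : y ^ 2 ≤ t) (hxy : x * y ≤ t) :
    a / 8 * smallProfile t x y ≤ p₁ t x y := by
  have ht : 1 < t := by nlinarith
  have h_sq : √t ^ 2 = t := sq_sqrt (by linarith)
  have h_sqrt : 1 < √t := lt_sqrt_of_sq_lt (by simpa)
  have hxt : x ≤ t := by nlinarith
  have ha := H.a_pos
  have h_exp := three_mul_exp_le (t := t) (x := x) (by linarith) (by nlinarith) hyt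
  have h_gauss : exp (-(x ^ 2 + y ^ 2) / (2 * t)) ≤ exp (-(1 + x ^ 2) / (2 * t)) := by
    refine exp_le_exp.2 (div_le_div_of_nonneg_right ?_ (by linarith))
    nlinarith
  have hx_ratio := logRatio_pos ht.le (zero_lt_one.trans hx) hxt
  have hy_ratio := logRatio_pos ht.le (zero_lt_one.trans hy) (by nlinarith)
  have hx_log := log_pos hx
  have hy_log := log_pos hy
  have h_two : log x / logRatio t y ≤ 2 :=
    (div_le_iff₀ hy_ratio).2 (log_le_two_mul_logRatio hxt hx (zero_lt_one.trans hy) hyt)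
  calc a / 8 * smallProfile t x y
      = a / 8 * (t⁻¹ * exp (-(x ^ 2 + y ^ 2) / (2 * t))) * (log y / logRatio t x) *
        (log x / logRatio t y) := by
        rw [smallProfile]
        ring
    _ ≤ a / 8 * (t⁻¹ * exp (-(1 + x ^ 2) / (2 * t))) *
        (2 * survivalProfile y ((2 * t / (x - 1)) ^ 2)) * 2 := by
        have := log_div_logRatio_le_survivalProfile_sq hx hx_sqrt hy hxy
        have : 0 ≤ log y / logRatio t x := by positivity
        have : 0 ≤ survivalProfile y ((2 * t / (x - 1)) ^ 2) := by linarith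
        gcongr
    _ = a / 2 * (t⁻¹ * exp (-(1 + x ^ 2) / (2 * t))) *
        survivalProfile y ((2 * t / (x - 1)) ^ 2) := by ring
    _ ≤ p₁ t y x := H.mul_survivalProfile_le hy hx hxt (by nlinarith) h_exp
    _ = p₁ t x y := H.symm (by linarith) hy hx

lemma mul_le_add_of_forall_mem_Icc (H : KilledBesselKernel p₁ q a A) (ht : 0 < t) (hs : 0 < s)
    (hx : 1 < x) (hy : 1 < y) (hb : 1 < b) (hbc : b ≤ c) (hm : 0 ≤ m) (hn : 0 ≤ n)
    (hm_le : ∀ w ∈ Set.Icc b c, m ≤ p₁ t x w) (hn_le : ∀ w ∈ Set.Icc b c, n ≤ p₁ s w y) :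
    (c - b) * (m * n * b) ≤ p₁ (t + s) x y := by
  have h_ck := H.ck ht hs hx hy
  have h_int : IntegrableOn (fun w => p₁ t x w * p₁ s w y * w) (Set.Ioi 1) :=
    Integrable.of_integral_ne_zero (h_ck ▸ (H.pos (add_pos ht hs) hx hy).ne')
  have h_sub : Set.Icc b c ⊆ Set.Ioi 1 := fun w hw => hb.trans_le hw.1
  calc (c - b) * (m * n * b) = ∫ _ in Set.Icc b c, m * n * b := by
        rw [setIntegral_const, volume_real_Icc_of_le hbc, smul_eq_mul]
    _ ≤ ∫ w in Set.Icc b c, p₁ t x w * p₁ s w y * w := by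
        refine setIntegral_mono_on (integrableOn_const (by simp)) (h_int.mono_set h_sub)
          measurableSet_Icc fun w hw => ?_
        have hmw := hm_le w hw
        have hnw := hn_le w hw
        exact mul_le_mul (mul_le_mul hmw hnw hn (hm.trans hmw)) hw.1 (by linarith)
          (mul_nonneg (hm.trans hmw) (hn.trans hnw))
    _ ≤ ∫ w in Set.Ioi 1, p₁ t x w * p₁ s w y * w := by
        refine setIntegral_mono_set h_int ?_ h_sub.eventuallyLE
        filter_upwards [ae_restrict_mem measurableSet_Ioi] with w hw
        exact mul_nonneg (mul_pos (H.pos ht hx hw) (H.pos hs hw hy)).le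
          (zero_lt_one.trans hw).le
    _ = p₁ (t + s) x y := h_ck.symm

lemma mul_survivalProfile_le_of_mem_Icc (H : KilledBesselKernel p₁ q a A) (hK : 10 ≤ K)
    (hK_sq : 3 * exp 16 ≤ K ^ 2) (hx : 1 < x) (hx_sqrt : x ≤ 4 * √t) (hKt : 4 * K ≤ √t)
    (hw : w ∈ Set.Icc (K * √t) (2 * K * √t)) :
    a / 2 * exp (-(4 * K ^ 2 + 1)) * t⁻¹ * survivalProfile x t ≤ p₁ (t / 2) x w := by
  have ht : 0 < t := sqrt_pos.1 (by linarith)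
  have h_sq : √t ^ 2 = t := sq_sqrt ht.le
  have ha := H.a_pos
  have hw_ten : 10 * √t ≤ w := le_trans (by gcongr) hw.1
  have hw_half : w ≤ t / 2 := by nlinarith [hw.2]
  have hw_ge : K ^ 2 * t ≤ w ^ 2 := by
    simpa only [mul_pow, h_sq] using pow_le_pow_left₀ (by positivity) hw.1 2
  have hw_le : w ^ 2 ≤ 2 ^ 2 * K ^ 2 * t := by
    simpa only [mul_pow, h_sq] using pow_le_pow_left₀ (by linarith) hw.2 2
  have hw_far : 4 * (t / 2) ≤ (w - 1) ^ 2 := by nlinarith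
  have h_exp : 3 * exp ((x ^ 2 - 1) / (2 * (t / 2))) ≤ w ^ 2 / (2 * (t / 2)) := by
    have h_le : (x ^ 2 - 1) / (2 * (t / 2)) ≤ 16 := (div_le_iff₀ (by linarith)).2 (by nlinarith)
    have h_ge : K ^ 2 ≤ w ^ 2 / (2 * (t / 2)) := (le_div_iff₀ (by linarith)).2 (by linarith)
    linarith [exp_le_exp.2 h_le]
  have h_gauss : -(4 * K ^ 2 + 1) ≤ -(1 + w ^ 2) / (2 * (t / 2)) := by
    rw [le_div_iff₀ (by linarith)]
    nlinarith
  have h_profile : survivalProfile x t ≤ survivalProfile x ((2 * (t / 2) / (w - 1)) ^ 2) := by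
    refine survivalProfile_anti (pow_pos (div_pos (by linarith) (by linarith)) 2) ?_ hx
    rw [div_pow, div_le_iff₀ (by linarith)]
    nlinarith
  calc a / 2 * exp (-(4 * K ^ 2 + 1)) * t⁻¹ * survivalProfile x t
      = a / 2 * (t⁻¹ * exp (-(4 * K ^ 2 + 1))) * survivalProfile x t := by ring
    _ ≤ a / 2 * ((t / 2)⁻¹ * exp (-(1 + w ^ 2) / (2 * (t / 2)))) *
        survivalProfile x ((2 * (t / 2) / (w - 1)) ^ 2) := by
        have := (survivalProfile_pos ht hx).le
        gcongr
        linarith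
    _ ≤ p₁ (t / 2) x w := H.mul_survivalProfile_le hx (by linarith) hw_half hw_far h_exp

lemma mul_survivalProfile_mul_le (H : KilledBesselKernel p₁ q a A) (hK : 10 ≤ K)
    (hK_sq : 3 * exp 16 ≤ K ^ 2) (hx : 1 < x) (hx_sqrt : x ≤ 4 * √t) (hy : 1 < y)
    (hy_sqrt : y ≤ 4 * √t) (hKt : 4 * K ≤ √t) :
    (a / 2 * exp (-(4 * K ^ 2 + 1)) * K) ^ 2 * t⁻¹ *
      (survivalProfile x t * survivalProfile y t) ≤ p₁ t x y := by
  have ht : 0 < t := sqrt_pos.1 (by linarith)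
  have ht₂ : 0 < t / 2 := half_pos ht
  have ha := H.a_pos
  have hx_profile := survivalProfile_pos ht hx
  have hy_profile := survivalProfile_pos ht hy
  have h_ck := H.mul_le_add_of_forall_mem_Icc (b := K * √t) (c := 2 * K * √t) ht₂ ht₂ hx hy
    (by nlinarith) (by nlinarith) (by positivity) (by positivity)
    (fun w hw => H.mul_survivalProfile_le_of_mem_Icc hK hK_sq hx hx_sqrt hKt hw)
    (fun w hw => (H.mul_survivalProfile_le_of_mem_Icc hK hK_sq hy hy_sqrt hKt hw).trans_eq
      (H.symm ht₂ hy (by nlinarith [hw.1])))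
  rw [add_halves] at h_ck
  refine le_trans (le_of_eq ?_) h_ck
  field_simp
  rw [sq_sqrt ht.le]
  ring

lemma mul_smallProfile_le_of_le_sqrt (H : KilledBesselKernel p₁ q a A) (hK : 10 ≤ K)
    (hK_sq : 3 * exp 16 ≤ K ^ 2) (hx : 1 < x) (hx_sqrt : x ≤ 4 * √t) (hy : 1 < y)
    (hy_sqrt : y ≤ 4 * √t) (hKt : 4 * K ≤ √t) :
    (a / 2 * exp (-(4 * K ^ 2 + 1)) * K) ^ 2 / 256 * smallProfile t x y ≤ p₁ t x y := by
  have ht : 0 < t := sqrt_pos.1 (by linarith)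
  have h_sq : √t ^ 2 = t := sq_sqrt ht.le
  have hxt : x ≤ t := by nlinarith
  have hyt : y ≤ t := by nlinarith
  have hx_profile := log_div_logRatio_le_survivalProfile hx hxt hx_sqrt
  have hy_profile := log_div_logRatio_le_survivalProfile hy hyt hy_sqrt
  have hx_nonneg : 0 ≤ log x / logRatio t x :=
    (div_pos (log_pos hx) (logRatio_pos (hx.le.trans hxt) (by linarith) hxt)).le
  have hy_nonneg : 0 ≤ log y / logRatio t y :=
    (div_pos (log_pos hy) (logRatio_pos (hy.le.trans hyt) (by linarith) hyt)).le
  have h_exp : exp (-(x ^ 2 + y ^ 2) / (2 * t)) ≤ 1 :=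
    exp_le_one_iff.2 (div_nonpos_of_nonpos_of_nonneg (by nlinarith) (by linarith))
  have hx_surv := hx_nonneg.trans hx_profile
  set κ := (a / 2 * exp (-(4 * K ^ 2 + 1)) * K) ^ 2
  have : 0 ≤ κ := sq_nonneg _
  calc κ / 256 * smallProfile t x y
      = κ / 256 * t⁻¹ * (log x / logRatio t x * (log y / logRatio t y)) *
        exp (-(x ^ 2 + y ^ 2) / (2 * t)) := by
        rw [smallProfile]
        ring
    _ ≤ κ / 256 * t⁻¹ * (log x / logRatio t x * (log y / logRatio t y)) :=
        mul_le_of_le_one_right (by positivity) h_exp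
    _ ≤ κ / 256 * t⁻¹ * (16 * survivalProfile x t * (16 * survivalProfile y t)) := by gcongr
    _ = κ * t⁻¹ * (survivalProfile x t * survivalProfile y t) := by ring
    _ ≤ p₁ t x y := H.mul_survivalProfile_mul_le hK hK_sq hx hx_sqrt hy hy_sqrt hKt

lemma exists_mul_smallProfile_le_of_le (H : KilledBesselKernel p₁ q a A) {T : ℝ} (hT : 0 < T) :
    ∃ c : ℝ, 0 < c ∧ ∀ t x y : ℝ, t ≤ T → 1 < x → 1 < y → x * y ≤ t →
      c * smallProfile t x y ≤ p₁ t x y := by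
  obtain ⟨g, hg, h_hker⟩ := exists_mul_le_sqrt_mul_hker hT
  have : 0 < log (3 / 2) := log_pos (by norm_num)
  refine ⟨g * log (3 / 2) ^ 2, by positivity, fun t x y htT hx hy hxy => ?_⟩
  calc g * log (3 / 2) ^ 2 * smallProfile t x y = g * (log (3 / 2) ^ 2 * smallProfile t x y) :=
        mul_assoc _ _ _
    _ ≤ g * ((x - 1) * (y - 1)) := mul_le_mul_of_nonneg_left
        (log_three_half_sq_mul_smallProfile_le hx hy (by nlinarith) (by nlinarith)) hg.le
    _ ≤ √(x * y) * hker t x y := h_hker t x y htT hx hy hxy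
    _ ≤ p₁ t x y := H.sqrt_mul_hker_le (by nlinarith) hx hy

lemma exists_mul_smallProfile_le (H : KilledBesselKernel p₁ q a A) :
    ∃ c : ℝ, 0 < c ∧ ∀ t x y : ℝ, 1 < x → 1 < y → y ≤ x → x * y ≤ t →
      c * smallProfile t x y ≤ p₁ t x y := by
  have ha := H.a_pos
  have hK : 10 ≤ exp 9 := by linarith [add_one_le_exp (9 : ℝ)]
  have hK_sq : 3 * exp 16 ≤ exp 9 ^ 2 := by
    rw [sq, ← exp_add, show (9 : ℝ) + 9 = 2 + 16 by norm_num, exp_add]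
    gcongr
    linarith [add_one_le_exp (2 : ℝ)]
  obtain ⟨c₁, hc₁, h_bounded⟩ := H.exists_mul_smallProfile_le_of_le (T := (4 * exp 9) ^ 2)
    (by positivity)
  set c₂ := (a / 2 * exp (-(4 * exp 9 ^ 2 + 1)) * exp 9) ^ 2 / 256
  refine ⟨min c₁ (min c₂ (a / 8)), by positivity, fun t x y hx hy hyx hxy => ?_⟩
  have hyt : y ^ 2 ≤ t := by nlinarith
  have h_nonneg := smallProfile_nonneg hx hy (t := t) (by nlinarith) (by nlinarith)
  rcases le_total x (4 * √t) with hx_sqrt | hx_sqrt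
  · rcases le_total (4 * exp 9) √t with hKt | hKt
    · refine le_trans ?_
        (H.mul_smallProfile_le_of_le_sqrt hK hK_sq hx hx_sqrt hy (hyx.trans hx_sqrt) hKt)
      gcongr
      exact (min_le_right _ _).trans (min_le_left _ _)
    · refine le_trans ?_ (h_bounded t x y ((sqrt_le_left (by positivity)).1 hKt) hx hy hxy)
      gcongr
      exact min_le_left _ _
  · refine le_trans ?_ (H.mul_smallProfile_le_of_sqrt_le hx hx_sqrt hy hyt hxy)
    gcongr
    exact (min_le_right _ _).trans (min_le_right _ _)

lemma exists_le_mul_smallProfile (H : KilledBesselKernel p₁ q a A) :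
    ∃ C : ℝ, ∀ t x y : ℝ, 1 < x → 1 < y → y ≤ x → x * y ≤ t →
      p₁ t x y ≤ C * smallProfile t x y := by
  refine ⟨max (108 * exp 11 * (1 + A) * A) (exp 2 * (12 + 10 * A)), fun t x y hx hy hyx hxy => ?_⟩
  have hxt : x ≤ t := by nlinarith
  have h_nonneg := smallProfile_nonneg hx hy hxt (hyx.trans hxt)
  rcases le_total x (4 * √t) with hx_sqrt | hx_sqrt
  · refine (H.le_smallProfile_of_le_sqrt hx hxt hx_sqrt hy (by nlinarith)).trans ?_
    gcongr
    exact le_max_left _ _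
  · refine (H.le_smallProfile_of_sqrt_le hx hx_sqrt hy hxy).trans ?_
    gcongr
    exact le_max_right _ _

end KilledBesselKernel

theorem bessel_heat_kernel_estimate_small_general {p₁ : ℝ → ℝ → ℝ → ℝ} {q : ℝ → ℝ → ℝ} {a A : ℝ}
    (H : KilledBesselKernel p₁ q a A) :
    ∃ c C : ℝ, 0 < c ∧ c ≤ C ∧ ∀ t x y : ℝ, 1 < x → 1 < y → x * y ≤ t →
      c * smallProfile t x y ≤ p₁ t x y ∧ p₁ t x y ≤ C * smallProfile t x y := by
  obtain ⟨c, hc, h_lower⟩ := H.exists_mul_smallProfile_le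
  obtain ⟨C, h_upper⟩ := H.exists_le_mul_smallProfile
  have h_ordered (t x y : ℝ) (hx : 1 < x) (hy : 1 < y) (hyx : y ≤ x) (hxy : x * y ≤ t) :
      c * smallProfile t x y ≤ p₁ t x y ∧ p₁ t x y ≤ max c C * smallProfile t x y := by
    have hxt : x ≤ t := by nlinarith
    refine ⟨h_lower t x y hx hy hyx hxy, (h_upper t x y hx hy hyx hxy).trans ?_⟩
    exact mul_le_mul_of_nonneg_right (le_max_right c C)
      (smallProfile_nonneg hx hy hxt (hyx.trans hxt))
  refine ⟨c, max c C, hc, le_max_left c C, fun t x y hx hy hxy => ?_⟩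
  rcases le_total y x with hyx | hxy_le
  · exact h_ordered t x y hx hy hyx hxy
  · rw [smallProfile_comm, H.symm (by nlinarith) hx hy]
    exact h_ordered t y x hy hx hxy_le (by linarith)

theorem bessel_heat_kernel_estimate_small (p₁ : ℝ → ℝ → ℝ → ℝ) (q : ℝ → ℝ → ℝ)
    (H : BesselHK p₁ q) :
    ∃ c C : ℝ, 0 < c ∧ c ≤ C ∧ ∀ t x y : ℝ, 0 < t → 1 < x → 1 < y → x*y ≤ t →
      c * (Real.log x * Real.log y *
            (Real.log (3*t/(x + Real.sqrt t)) * Real.log (3*t/(y + Real.sqrt t)))⁻¹ *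
            t⁻¹ * Real.exp (-(x^2+y^2)/(2*t))) ≤ p₁ t x y ∧
      p₁ t x y ≤ C * (Real.log x * Real.log y *
            (Real.log (3*t/(x + Real.sqrt t)) * Real.log (3*t/(y + Real.sqrt t)))⁻¹ *
            t⁻¹ * Real.exp (-(x^2+y^2)/(2*t))) := by
  obtain ⟨a, A, hK⟩ := H.exists_killedBesselKernel
  obtain ⟨c, C, hc, hcC, h_bounds⟩ := bessel_heat_kernel_estimate_small_general hK
  exact ⟨c, C, hc, hcC, fun t x y _ => h_bounds t x y⟩
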